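/- In the antithetic Milstein setting, let P : ℝ^d → ℝ be twice continuously differentiable with uniformly bounded first and second derivatives. Then there exists a constant K, independent of N, such that for every N ≥ 1 (with Δt = T/N), the multilevel correction variance satisfies Var[ (1/2)(P(X^f_N) + P(X^a_N)) − P(X^c_N) ] ≤ K · Δt². -/

import Mathlib

open MeasureTheory ProbabilityTheory

/-- `h_{ijk}(x) = ½ ∑_l g_{lj}(x) ∂g_{ik}/∂x_l (x)`. -/
noncomputable def milsteinH {d m : ℕ} (g : (Fin d → ℝ) → Fin d → Fin m → ℝ)
    (x : Fin d → ℝ) (i : Fin d) (j k : Fin m) : ℝ :=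
  1 / 2 * ∑ l : Fin d, g x l j * fderiv ℝ (fun y => g y i k) x (Pi.single l 1)

/-- One step of the Milstein scheme with the Lévy areas omitted:
`x_i ↦ x_i + f_i(x) dt + ∑_j g_{ij}(x) dw_j + ∑_{j,k} h_{ijk}(x)(dw_j dw_k − δ_{jk} dt)`. -/
noncomputable def milsteinStep {d m : ℕ} (f : (Fin d → ℝ) → Fin d → ℝ)
    (g : (Fin d → ℝ) → Fin d → Fin m → ℝ) (dt : ℝ)
    (x : Fin d → ℝ) (dw : Fin m → ℝ) : Fin d → ℝ :=
  fun i => x i + f x i * dt + (∑ j : Fin m, g x i j * dw j)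
    + ∑ j : Fin m, ∑ k : Fin m,
        milsteinH g x i j k * (dw j * dw k - if j = k then dt else 0)

namespace AM

/-- standard half-step noise -/
noncomputable def gam (m : ℕ) : Measure (Fin m → ℝ) :=
  Measure.pi fun _ => gaussianReal 0 (1 / 2)

instance (m : ℕ) : IsProbabilityMeasure (gam m) := by unfold gam; infer_instance

/-- two half steps -/
noncomputable def gam2 (m : ℕ) : Measure ((Fin m → ℝ) × (Fin m → ℝ)) := (gam m).prod (gam m)

instance (m : ℕ) : IsProbabilityMeasure (gam2 m) := by unfold gam2; infer_instance

lemma gam_int_coord (m : ℕ) (j : Fin m) : ∫ ξ, ξ j ∂(gam m) = 0 := by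
  have h := (measurePreserving_eval (fun _ : Fin m => gaussianReal 0 (1 / 2)) j)
  have h2 := integral_map (μ := gam m) (φ := Function.eval j) (f := fun x : ℝ => x)
    h.measurable.aemeasurable (by fun_prop)
  have h3 : Measure.map (Function.eval j) (gam m) = gaussianReal 0 (1 / 2) := h.map_eq
  rw [h3, integral_id_gaussianReal] at h2
  exact h2.symm

lemma gam_memLp (m : ℕ) (j : Fin m) (k : ℕ) : MemLp (fun ξ : Fin m → ℝ => ξ j) k (gam m) := by
  have h := (measurePreserving_eval (fun _ : Fin m => gaussianReal 0 (1 / 2)) j)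
  have := (memLp_id_gaussianReal (μ := 0) (v := 1 / 2) (k : NNReal)).comp_measurePreserving h
  exact this

lemma gam_int_sq (m : ℕ) (j : Fin m) : ∫ ξ, ξ j * ξ j ∂(gam m) = 1 / 2 := by
  have h := (measurePreserving_eval (fun _ : Fin m => gaussianReal 0 (1 / 2)) j)
  have h2 := integral_map (μ := gam m) (φ := Function.eval j) (f := fun x : ℝ => x * x)
    h.measurable.aemeasurable (by fun_prop)
  have h3 : Measure.map (Function.eval j) (gam m) = gaussianReal 0 (1 / 2) := h.map_eq
  have h4 := variance_id_gaussianReal (μ := 0) (v := 1 / 2)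
  rw [variance_eq_integral (by fun_prop)] at h4
  simp [integral_id_gaussianReal] at h4
  rw [h3] at h2
  simp only [Function.eval] at h2
  rw [← h2]
  simp only [← pow_two]
  rw [one_div, h4]; norm_num

lemma gam_int_mul (m : ℕ) (j k : Fin m) (hjk : j ≠ k) : ∫ ξ, ξ j * ξ k ∂(gam m) = 0 := by
  have h := (iIndepFun_pi (μ := fun _ : Fin m => gaussianReal 0 (1 / 2)) (X := fun _ x => x)
    (fun _ => by fun_prop)).indepFun hjk
  have h2 := h.integral_mul_eq_mul_integral (measurable_pi_apply j).aestronglyMeasurable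
    (measurable_pi_apply k).aestronglyMeasurable
  have h3 := gam_int_coord m j
  unfold gam at h3 ⊢
  rw [h3, zero_mul] at h2
  exact h2

lemma gam_integrable_mul (m : ℕ) (j k : Fin m) : Integrable (fun ξ => ξ j * ξ k) (gam m) := by
  have h1 : MemLp (fun ξ : Fin m → ℝ => ξ j) 2 (gam m) := by exact_mod_cast gam_memLp m j 2
  have h2 : MemLp (fun ξ : Fin m → ℝ => ξ k) 2 (gam m) := by exact_mod_cast gam_memLp m k 2
  exact h1.integrable_mul h2

lemma gam_int_quad (m : ℕ) (j k : Fin m) :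
    ∫ ξ, (ξ j * ξ k - if j = k then 1 / 2 else 0) ∂(gam m) = 0 := by
  rw [integral_sub (gam_integrable_mul m j k) (integrable_const _)]
  by_cases h : j = k
  · subst h; simp [gam_int_sq]
  · simp [h, gam_int_mul m j k h]

/-- polynomial weight -/
noncomputable def Q {m : ℕ} (ξ : (Fin m → ℝ) × (Fin m → ℝ)) : ℝ := 1 + ‖ξ‖

lemma Q_one {m : ℕ} (ξ : (Fin m → ℝ) × (Fin m → ℝ)) : 1 ≤ Q ξ := by
  unfold Q; linarith [norm_nonneg ξ]

lemma Q_swap {m : ℕ} (ξ : (Fin m → ℝ) × (Fin m → ℝ)) : Q ξ.swap = Q ξ := by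
  unfold Q; simp [Prod.norm_def, max_comm]

lemma Q_pow_mono {m : ℕ} (ξ : (Fin m → ℝ) × (Fin m → ℝ)) {a b : ℕ} (h : a ≤ b) :
    Q ξ ^ a ≤ Q ξ ^ b := pow_le_pow_right₀ (Q_one ξ) h

lemma Q_fst {m : ℕ} (ξ : (Fin m → ℝ) × (Fin m → ℝ)) (j : Fin m) : |ξ.1 j| ≤ Q ξ := by
  have h1 := norm_le_pi_norm ξ.1 j
  have h2 := norm_fst_le ξ
  rw [Real.norm_eq_abs] at h1
  unfold Q; linarith

lemma Q_snd {m : ℕ} (ξ : (Fin m → ℝ) × (Fin m → ℝ)) (j : Fin m) : |ξ.2 j| ≤ Q ξ := by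
  have h1 := norm_le_pi_norm ξ.2 j
  have h2 := norm_snd_le ξ
  rw [Real.norm_eq_abs] at h1
  unfold Q; linarith

lemma Q_meas {m : ℕ} : Measurable (Q (m := m)) := by unfold Q; fun_prop

lemma gam_sum_memLp (m k : ℕ) : MemLp (fun ξ : Fin m → ℝ => ∑ j, |ξ j|) k (gam m) := by
  apply memLp_finsetSum
  intro j _
  exact (gam_memLp m j k).abs

lemma norm_le_sum_abs {m : ℕ} (x : Fin m → ℝ) : ‖x‖ ≤ ∑ j, |x j| := by
  rw [pi_norm_le_iff_of_nonneg (by positivity)]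
  intro j
  exact Finset.single_le_sum (f := fun j => |x j|) (fun _ _ => abs_nonneg _) (Finset.mem_univ j)

lemma gam2_map_fst (m : ℕ) : MeasurePreserving Prod.fst (gam2 m) (gam m) := by
  unfold gam2; exact measurePreserving_fst

lemma gam2_map_snd (m : ℕ) : MeasurePreserving Prod.snd (gam2 m) (gam m) := by
  unfold gam2; exact measurePreserving_snd

lemma Q_memLp1 (m k : ℕ) :
    MemLp (fun ξ : (Fin m → ℝ) × (Fin m → ℝ) => ∑ j, |ξ.1 j|) k (gam2 m) :=
  MemLp.comp_measurePreserving (g := fun ξ : Fin m → ℝ => ∑ j, |ξ j|) (gam_sum_memLp m k) (gam2_map_fst m)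

lemma Q_memLp2 (m k : ℕ) :
    MemLp (fun ξ : (Fin m → ℝ) × (Fin m → ℝ) => ∑ j, |ξ.2 j|) k (gam2 m) :=
  MemLp.comp_measurePreserving (g := fun ξ : Fin m → ℝ => ∑ j, |ξ j|) (gam_sum_memLp m k) (gam2_map_snd m)

lemma Q_memLp (m k : ℕ) : MemLp (Q (m := m)) k (gam2 m) := by
  have h1 := Q_memLp1 m k
  have h2 := Q_memLp2 m k
  have h3 : MemLp (fun ξ : (Fin m → ℝ) × (Fin m → ℝ) => 1 + (∑ j, |ξ.1 j|) + ∑ j, |ξ.2 j|) k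
      (gam2 m) := by
    have h0 : MemLp (fun _ : (Fin m → ℝ) × (Fin m → ℝ) => (1 : ℝ)) k (gam2 m) := memLp_const 1
    exact (h0.add h1).add h2
  refine MemLp.mono h3 Q_meas.aestronglyMeasurable (Filter.Eventually.of_forall ?_)
  intro ξ
  have e1 := norm_le_sum_abs ξ.1
  have e2 := norm_le_sum_abs ξ.2
  have e3 : ‖ξ‖ ≤ ‖ξ.1‖ + ‖ξ.2‖ := by
    rw [Prod.norm_def]; apply max_le <;> linarith [norm_nonneg ξ.1, norm_nonneg ξ.2]
  have e4 : (0 : ℝ) ≤ Q ξ := by linarith [Q_one ξ]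
  have e5 : Q ξ ≤ 1 + (∑ j, |ξ.1 j|) + ∑ j, |ξ.2 j| := by unfold Q; linarith
  rw [Real.norm_of_nonneg e4]
  exact e5.trans (le_abs_self _)

lemma Q_int (m k : ℕ) : Integrable (fun ξ => Q ξ ^ k) (gam2 m) := by
  have h5 : Integrable (fun ξ => ‖Q ξ‖ ^ k) (gam2 m) := (Q_memLp m k).integrable_norm_pow'
  have h6 : (fun ξ => ‖Q ξ‖ ^ k) = fun ξ : (Fin m → ℝ) × (Fin m → ℝ) => Q ξ ^ k := by
    funext ξ
    rw [Real.norm_of_nonneg (by linarith [Q_one ξ] : (0:ℝ) ≤ Q ξ)]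
  rwa [h6] at h5

/-- `u` decomposes as drift (size `η² A`) plus martingale part (size `η A`). -/
def Dec {m : ℕ} (η A : ℝ) (u : (Fin m → ℝ) × (Fin m → ℝ) → ℝ) : Prop :=
  ∃ r z : (Fin m → ℝ) × (Fin m → ℝ) → ℝ, Measurable r ∧ Measurable z ∧
    (∀ ξ, u ξ = η ^ 2 * r ξ + η * z ξ) ∧ (∀ ξ, |r ξ| ≤ A * Q ξ ^ 6) ∧
    (∀ ξ, |z ξ| ≤ A * Q ξ ^ 6) ∧ ∫ ξ, z ξ ∂(gam2 m) = 0

lemma int_of_bd {m : ℕ} {z : (Fin m → ℝ) × (Fin m → ℝ) → ℝ} {A : ℝ} {k : ℕ} (hz : Measurable z)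
    (h : ∀ ξ, |z ξ| ≤ A * Q ξ ^ k) : Integrable z (gam2 m) :=
  ((Q_int m k).const_mul A).mono' hz.aestronglyMeasurable
    (Filter.Eventually.of_forall fun ξ => h ξ)

lemma Dec.add {m : ℕ} {η A B : ℝ} {u v : (Fin m → ℝ) × (Fin m → ℝ) → ℝ} (hu : Dec η A u)
    (hv : Dec η B v) : Dec η (A + B) (fun ξ => u ξ + v ξ) := by
  obtain ⟨r, z, hr, hz, e, br, bz, iz⟩ := hu
  obtain ⟨r', z', hr', hz', e', br', bz', iz'⟩ := hv
  refine ⟨fun ξ => r ξ + r' ξ, fun ξ => z ξ + z' ξ, hr.add hr', hz.add hz', ?_, ?_, ?_, ?_⟩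
  · intro ξ; simp only [e, e']; ring
  · intro ξ; rw [add_mul]; exact (abs_add_le _ _).trans (add_le_add (br ξ) (br' ξ))
  · intro ξ; rw [add_mul]; exact (abs_add_le _ _).trans (add_le_add (bz ξ) (bz' ξ))
  · rw [integral_add (int_of_bd hz bz) (int_of_bd hz' bz'), iz, iz', add_zero]

lemma Dec.smul {m : ℕ} {η A : ℝ} {u : (Fin m → ℝ) × (Fin m → ℝ) → ℝ} (c : ℝ) (hu : Dec η A u) :
    Dec η (|c| * A) (fun ξ => c * u ξ) := by
  obtain ⟨r, z, hr, hz, e, br, bz, iz⟩ := hu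
  refine ⟨fun ξ => c * r ξ, fun ξ => c * z ξ, hr.const_mul c, hz.const_mul c, ?_, ?_, ?_, ?_⟩
  · intro ξ; simp only [e]; ring
  · intro ξ; rw [abs_mul, mul_assoc]; exact mul_le_mul_of_nonneg_left (br ξ) (abs_nonneg c)
  · intro ξ; rw [abs_mul, mul_assoc]; exact mul_le_mul_of_nonneg_left (bz ξ) (abs_nonneg c)
  · rw [integral_const_mul, iz, mul_zero]

lemma Dec.mono {m : ℕ} {η A B : ℝ} {u : (Fin m → ℝ) × (Fin m → ℝ) → ℝ} (hu : Dec η A u)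
    (h : A ≤ B) : Dec η B u := by
  obtain ⟨r, z, hr, hz, e, br, bz, iz⟩ := hu
  have hQ : ∀ ξ : (Fin m → ℝ) × (Fin m → ℝ), 0 ≤ Q ξ ^ 6 := fun ξ => by
    have := Q_one ξ; positivity
  exact ⟨r, z, hr, hz, e, fun ξ => (br ξ).trans (mul_le_mul_of_nonneg_right h (hQ ξ)),
    fun ξ => (bz ξ).trans (mul_le_mul_of_nonneg_right h (hQ ξ)), iz⟩

lemma Dec.congr {m : ℕ} {η A : ℝ} {u v : (Fin m → ℝ) × (Fin m → ℝ) → ℝ} (hu : Dec η A u)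
    (h : ∀ ξ, v ξ = u ξ) : Dec η A v := by
  have : v = u := funext h
  rw [this]; exact hu

lemma Dec.swap {m : ℕ} {η A : ℝ} {u : (Fin m → ℝ) × (Fin m → ℝ) → ℝ} (hu : Dec η A u) :
    Dec η A (fun ξ => u ξ.swap) := by
  obtain ⟨r, z, hr, hz, e, br, bz, iz⟩ := hu
  refine ⟨fun ξ => r ξ.swap, fun ξ => z ξ.swap, hr.comp measurable_swap, hz.comp measurable_swap,
    fun ξ => e _, fun ξ => ?_, fun ξ => ?_, ?_⟩
  · have := br ξ.swap; rwa [Q_swap] at this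
  · have := bz ξ.swap; rwa [Q_swap] at this
  · unfold gam2 at iz ⊢
    rw [integral_prod_swap, iz]

lemma Dec.zero {m : ℕ} (η : ℝ) : Dec (m := m) η 0 (fun _ => 0) :=
  ⟨fun _ => 0, fun _ => 0, measurable_const, measurable_const, by simp, by simp, by simp, by simp⟩

lemma Dec.sum {m : ℕ} {η : ℝ} {ι : Type*} (s : Finset ι) {A : ι → ℝ}
    {u : ι → (Fin m → ℝ) × (Fin m → ℝ) → ℝ} (hu : ∀ i ∈ s, Dec η (A i) (u i)) :
    Dec η (∑ i ∈ s, A i) (fun ξ => ∑ i ∈ s, u i ξ) := by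
  classical
  induction s using Finset.induction_on with
  | empty => simpa using Dec.zero η
  | insert a s ha ih =>
    simp only [Finset.sum_insert ha]
    exact (hu a (by simp)).add (ih fun i hi => hu i (by simp [hi]))

lemma Dec.sumC {m : ℕ} {η A : ℝ} {n : ℕ}
    {u : Fin n → (Fin m → ℝ) × (Fin m → ℝ) → ℝ} (hu : ∀ i, Dec η A (u i)) :
    Dec η (n * A) (fun ξ => ∑ i, u i ξ) := by
  have := Dec.sum Finset.univ (A := fun _ => A) (fun i _ => hu i)
  simpa using this

lemma Dec.drift {m : ℕ} {η A : ℝ} (hA : 0 ≤ A) {r : (Fin m → ℝ) × (Fin m → ℝ) → ℝ}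
    (hr : Measurable r) (h : ∀ ξ, |r ξ| ≤ A * Q ξ ^ 6) : Dec η A (fun ξ => η ^ 2 * r ξ) :=
  ⟨r, fun _ => 0, hr, measurable_const, by simp, h,
    fun ξ => by have := Q_one ξ; simp; positivity, by simp⟩

lemma Dec.mart {m : ℕ} {η A : ℝ} (hA : 0 ≤ A) {Ψ ψ : (Fin m → ℝ) → ℝ}
    (hΨ : Measurable Ψ) (hψ : Measurable ψ) (h0 : ∫ ξ, ψ ξ ∂(gam m) = 0)
    (h : ∀ ξ : (Fin m → ℝ) × (Fin m → ℝ), |Ψ ξ.1 * ψ ξ.2| ≤ A * Q ξ ^ 6) :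
    Dec η A (fun ξ => η * (Ψ ξ.1 * ψ ξ.2)) :=
  ⟨fun _ => 0, fun ξ => Ψ ξ.1 * ψ ξ.2, measurable_const,
    (hΨ.comp measurable_fst).mul (hψ.comp measurable_snd), by simp,
    fun ξ => by have := Q_one ξ; simp; positivity, h,
    by unfold gam2; rw [integral_prod_mul, h0, mul_zero]⟩

/-- integrable with integral at most `c` -/
def EB {m : ℕ} (u : (Fin m → ℝ) × (Fin m → ℝ) → ℝ) (c : ℝ) : Prop :=
  Integrable u (gam2 m) ∧ ∫ ξ, u ξ ∂(gam2 m) ≤ c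

lemma EB.add {m : ℕ} {u v : (Fin m → ℝ) × (Fin m → ℝ) → ℝ} {a b : ℝ} (hu : EB u a) (hv : EB v b) :
    EB (fun ξ => u ξ + v ξ) (a + b) :=
  ⟨hu.1.add hv.1, by rw [integral_add hu.1 hv.1]; exact add_le_add hu.2 hv.2⟩

lemma EB.sum {m n : ℕ} {u : Fin n → (Fin m → ℝ) × (Fin m → ℝ) → ℝ} {a : Fin n → ℝ}
    (hu : ∀ i, EB (u i) (a i)) : EB (fun ξ => ∑ i, u i ξ) (∑ i, a i) :=
  ⟨integrable_finsetSum _ fun i _ => (hu i).1, by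
    rw [integral_finsetSum _ fun i _ => (hu i).1]
    exact Finset.sum_le_sum fun i _ => (hu i).2⟩

lemma EB.smul {m : ℕ} {u : (Fin m → ℝ) × (Fin m → ℝ) → ℝ} {a c : ℝ} (hc : 0 ≤ c) (hu : EB u a) :
    EB (fun ξ => c * u ξ) (c * a) :=
  ⟨hu.1.const_mul c, by rw [integral_const_mul]; exact mul_le_mul_of_nonneg_left hu.2 hc⟩

lemma EB.const {m : ℕ} (c : ℝ) : EB (m := m) (fun _ => c) c := ⟨integrable_const _, by simp⟩

lemma EB.congr {m : ℕ} {u v : (Fin m → ℝ) × (Fin m → ℝ) → ℝ} {a b : ℝ} (hu : EB u a)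
    (h : ∀ ξ, v ξ = u ξ) (hab : a ≤ b) : EB v b := by
  have : v = u := funext h
  rw [this]; exact ⟨hu.1, hu.2.trans hab⟩

lemma quart_ineq (M D η r z q : ℝ) (hη : 0 ≤ η) (hηM : η ≤ M) (hr : |r| ≤ q) (hz : |z| ≤ q) :
    (D + (η ^ 2 * r + η * z)) ^ 4 ≤ D ^ 4 + (4 * D ^ 3 * η) * z
      + η ^ 2 * (3 + 8 * (M ^ 2 + 1) + 1 + 12 * M ^ 2 * (M ^ 2 + 1) ^ 2) * (D ^ 4 + q ^ 4) := by
  have hq : 0 ≤ q := (abs_nonneg r).trans hr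
  have hr2 : r ^ 2 ≤ q ^ 2 := sq_le_sq' (abs_le.1 hr).1 (abs_le.1 hr).2
  have hz2 : z ^ 2 ≤ q ^ 2 := sq_le_sq' (abs_le.1 hz).1 (abs_le.1 hz).2
  have hη2 : η ^ 2 ≤ M ^ 2 := pow_le_pow_left₀ hη hηM 2
  set v := η ^ 2 * r + η * z with hv
  have hv2 : v ^ 2 ≤ 2 * η ^ 2 * (M ^ 2 + 1) * q ^ 2 := by
    have h1 : v ^ 2 ≤ 2 * η ^ 2 * (η ^ 2 * r ^ 2 + z ^ 2) := by
      rw [hv]; nlinarith [sq_nonneg (η ^ 2 * r - η * z)]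
    have h2 : η ^ 2 * r ^ 2 + z ^ 2 ≤ M ^ 2 * q ^ 2 + q ^ 2 :=
      add_le_add (mul_le_mul hη2 hr2 (sq_nonneg _) (sq_nonneg _)) hz2
    calc v ^ 2 ≤ _ := h1
      _ ≤ 2 * η ^ 2 * (M ^ 2 * q ^ 2 + q ^ 2) := by gcongr
      _ = _ := by ring
  have hv4 : v ^ 4 ≤ 4 * η ^ 2 * M ^ 2 * (M ^ 2 + 1) ^ 2 * q ^ 4 := by
    calc v ^ 4 = (v ^ 2) ^ 2 := by ring
      _ ≤ (2 * η ^ 2 * (M ^ 2 + 1) * q ^ 2) ^ 2 := by gcongr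
      _ = 4 * η ^ 2 * η ^ 2 * (M ^ 2 + 1) ^ 2 * q ^ 4 := by ring
      _ ≤ _ := by gcongr
  have h1 : (D + v) ^ 4 ≤ D ^ 4 + 4 * D ^ 3 * v + 8 * D ^ 2 * v ^ 2 + 3 * v ^ 4 := by
    nlinarith [sq_nonneg (v * (D - v))]
  have h2 : 8 * D ^ 2 * v ^ 2 ≤ 8 * η ^ 2 * (M ^ 2 + 1) * (D ^ 4 + q ^ 4) := by
    calc 8 * D ^ 2 * v ^ 2 ≤ 8 * D ^ 2 * (2 * η ^ 2 * (M ^ 2 + 1) * q ^ 2) := by gcongr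
      _ = 8 * η ^ 2 * (M ^ 2 + 1) * (2 * D ^ 2 * q ^ 2) := by ring
      _ ≤ 8 * η ^ 2 * (M ^ 2 + 1) * (D ^ 4 + q ^ 4) := by
        gcongr; nlinarith [sq_nonneg (D ^ 2 - q ^ 2)]
  have h3 : 4 * D ^ 3 * r ≤ 3 * D ^ 4 + q ^ 4 := by
    have : r ^ 4 ≤ q ^ 4 := by
      calc r ^ 4 = (r ^ 2) ^ 2 := by ring
        _ ≤ (q ^ 2) ^ 2 := by gcongr
        _ = _ := by ring
    nlinarith [sq_nonneg (D * (D - r)), sq_nonneg (D ^ 2 - r ^ 2), sq_nonneg (D * r - D ^ 2),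
      sq_nonneg (D ^ 2 - D * r)]
  have h4 : η ^ 2 * (4 * D ^ 3 * r) ≤ η ^ 2 * (3 * D ^ 4 + q ^ 4) := by gcongr
  have h5 : 4 * D ^ 3 * v = η ^ 2 * (4 * D ^ 3 * r) + (4 * D ^ 3 * η) * z := by rw [hv]; ring
  have h6 : 0 ≤ η ^ 2 * q ^ 4 := by positivity
  have h7 : 0 ≤ η ^ 2 * D ^ 4 := by positivity
  have h8 : 0 ≤ 12 * η ^ 2 * M ^ 2 * (M ^ 2 + 1) ^ 2 * D ^ 4 := by positivity
  nlinarith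

lemma sq_ineq (M D η r z q : ℝ) (hη : 0 ≤ η) (hηM : η ≤ M) (hr : |r| ≤ q) (hz : |z| ≤ q) :
    (D + (η ^ 2 * r + η * z)) ^ 2 ≤ D ^ 2 + (2 * D * η) * z
      + η ^ 2 * (1 + 2 * (M ^ 2 + 1)) * (D ^ 2 + q ^ 2) := by
  have hq : 0 ≤ q := (abs_nonneg r).trans hr
  have hr2 : r ^ 2 ≤ q ^ 2 := sq_le_sq' (abs_le.1 hr).1 (abs_le.1 hr).2
  have hz2 : z ^ 2 ≤ q ^ 2 := sq_le_sq' (abs_le.1 hz).1 (abs_le.1 hz).2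
  have hη2 : η ^ 2 ≤ M ^ 2 := pow_le_pow_left₀ hη hηM 2
  set v := η ^ 2 * r + η * z with hv
  have hv2 : v ^ 2 ≤ 2 * η ^ 2 * (M ^ 2 + 1) * q ^ 2 := by
    have h1 : v ^ 2 ≤ 2 * η ^ 2 * (η ^ 2 * r ^ 2 + z ^ 2) := by
      rw [hv]; nlinarith [sq_nonneg (η ^ 2 * r - η * z)]
    have h2 : η ^ 2 * r ^ 2 + z ^ 2 ≤ M ^ 2 * q ^ 2 + q ^ 2 :=
      add_le_add (mul_le_mul hη2 hr2 (sq_nonneg _) (sq_nonneg _)) hz2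
    calc v ^ 2 ≤ _ := h1
      _ ≤ 2 * η ^ 2 * (M ^ 2 * q ^ 2 + q ^ 2) := by gcongr
      _ = _ := by ring
  have h3 : 2 * D * r ≤ D ^ 2 + q ^ 2 := by nlinarith [sq_nonneg (D - r)]
  have h4 : η ^ 2 * (2 * D * r) ≤ η ^ 2 * (D ^ 2 + q ^ 2) := by gcongr
  have h5 : (D + v) ^ 2 = D ^ 2 + (η ^ 2 * (2 * D * r) + (2 * D * η) * z) + v ^ 2 := by
    rw [hv]; ring
  have h6 : 0 ≤ 2 * η ^ 2 * (M ^ 2 + 1) * D ^ 2 := by positivity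
  nlinarith

lemma moment4 (m : ℕ) (M : ℝ) : ∃ K : ℝ, 0 ≤ K ∧ ∀ (η A D : ℝ)
    (u : (Fin m → ℝ) × (Fin m → ℝ) → ℝ), 0 ≤ η → η ≤ M → Dec η A u →
    EB (fun ξ => (D + u ξ) ^ 4) (D ^ 4 + K * η ^ 2 * (D ^ 4 + A ^ 4)) := by
  set I := ∫ ξ, Q ξ ^ 24 ∂(gam2 m) with hI
  set K0 := (3 + 8 * (M ^ 2 + 1) + 1 + 12 * M ^ 2 * (M ^ 2 + 1) ^ 2) with hK0
  have hK0' : 0 ≤ K0 := by positivity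
  have hI0 : 0 ≤ I := integral_nonneg fun ξ => by have := Q_one ξ; positivity
  refine ⟨K0 * (1 + I), by positivity, ?_⟩
  intro η A D u hη hηM hu
  obtain ⟨r, z, hr, hz, e, br, bz, iz⟩ := hu
  have hb : ∀ ξ, (D + u ξ) ^ 4 ≤ (D ^ 4 + η ^ 2 * K0 * D ^ 4) + (4 * D ^ 3 * η) * z ξ
      + (η ^ 2 * K0 * A ^ 4) * Q ξ ^ 24 := by
    intro ξ
    have := quart_ineq M D η (r ξ) (z ξ) (A * Q ξ ^ 6) hη hηM (br ξ) (bz ξ)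
    rw [e]
    refine this.trans (le_of_eq ?_)
    rw [← hK0]; ring
  have hzi := int_of_bd hz bz
  have hE : EB (fun ξ => (D ^ 4 + η ^ 2 * K0 * D ^ 4) + (4 * D ^ 3 * η) * z ξ
      + (η ^ 2 * K0 * A ^ 4) * Q ξ ^ 24) ((D ^ 4 + η ^ 2 * K0 * D ^ 4) + 0
      + (η ^ 2 * K0 * A ^ 4) * I) :=
    ((EB.const _).add ⟨hzi.const_mul _, by rw [integral_const_mul, iz, mul_zero]⟩).add
      ⟨(Q_int m 24).const_mul _, by rw [integral_const_mul]⟩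
  have hinteg := hE.1
  have hmu : Measurable u := by
    have : u = fun ξ => η ^ 2 * r ξ + η * z ξ := funext e
    rw [this]; fun_prop
  have hinteg2 : Integrable (fun ξ => (D + u ξ) ^ 4) (gam2 m) := by
    refine hinteg.mono' (by fun_prop) (Filter.Eventually.of_forall fun ξ => ?_)
    rw [Real.norm_of_nonneg (by positivity)]; exact hb ξ
  refine ⟨hinteg2, (integral_mono hinteg2 hinteg hb).trans (hE.2.trans ?_)⟩
  have h1 : 0 ≤ K0 * η ^ 2 * I * D ^ 4 := by positivity
  have h2 : 0 ≤ K0 * η ^ 2 * A ^ 4 := by positivity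
  nlinarith

lemma moment2 (m : ℕ) (M : ℝ) : ∃ K : ℝ, 0 ≤ K ∧ ∀ (η A D : ℝ)
    (u : (Fin m → ℝ) × (Fin m → ℝ) → ℝ), 0 ≤ η → η ≤ M → Dec η A u →
    EB (fun ξ => (D + u ξ) ^ 2) (D ^ 2 + K * η ^ 2 * (D ^ 2 + A ^ 2)) := by
  set I := ∫ ξ, Q ξ ^ 12 ∂(gam2 m) with hI
  set K0 := (1 + 2 * (M ^ 2 + 1)) with hK0
  have hK0' : 0 ≤ K0 := by positivity
  have hI0 : 0 ≤ I := integral_nonneg fun ξ => by have := Q_one ξ; positivity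
  refine ⟨K0 * (1 + I), by positivity, ?_⟩
  intro η A D u hη hηM hu
  obtain ⟨r, z, hr, hz, e, br, bz, iz⟩ := hu
  have hb : ∀ ξ, (D + u ξ) ^ 2 ≤ (D ^ 2 + η ^ 2 * K0 * D ^ 2) + (2 * D * η) * z ξ
      + (η ^ 2 * K0 * A ^ 2) * Q ξ ^ 12 := by
    intro ξ
    have := sq_ineq M D η (r ξ) (z ξ) (A * Q ξ ^ 6) hη hηM (br ξ) (bz ξ)
    rw [e]
    refine this.trans (le_of_eq ?_)
    rw [← hK0]; ring
  have hzi := int_of_bd hz bz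
  have hE : EB (fun ξ => (D ^ 2 + η ^ 2 * K0 * D ^ 2) + (2 * D * η) * z ξ
      + (η ^ 2 * K0 * A ^ 2) * Q ξ ^ 12) ((D ^ 2 + η ^ 2 * K0 * D ^ 2) + 0
      + (η ^ 2 * K0 * A ^ 2) * I) :=
    ((EB.const _).add ⟨hzi.const_mul _, by rw [integral_const_mul, iz, mul_zero]⟩).add
      ⟨(Q_int m 12).const_mul _, by rw [integral_const_mul]⟩
  have hinteg := hE.1
  have hmu : Measurable u := by
    have : u = fun ξ => η ^ 2 * r ξ + η * z ξ := funext e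
    rw [this]; fun_prop
  have hinteg2 : Integrable (fun ξ => (D + u ξ) ^ 2) (gam2 m) := by
    refine hinteg.mono' (by fun_prop) (Filter.Eventually.of_forall fun ξ => ?_)
    rw [Real.norm_of_nonneg (by positivity)]; exact hb ξ
  refine ⟨hinteg2, (integral_mono hinteg2 hinteg hb).trans (hE.2.trans ?_)⟩
  have h1 : 0 ≤ K0 * η ^ 2 * I * D ^ 2 := by positivity
  have h2 : 0 ≤ K0 * η ^ 2 * A ^ 2 := by positivity
  nlinarith

end AM

namespace AM

lemma lip_of_bd {E F : Type*} [NormedAddCommGroup E] [NormedSpace ℝ E] [NormedAddCommGroup F]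
    [NormedSpace ℝ F] {f : E → F} (hf : ContDiff ℝ 2 f) {C : ℝ}
    (h1 : ∀ x, ‖fderiv ℝ f x‖ ≤ C) (x y : E) : ‖f x - f y‖ ≤ C * ‖x - y‖ :=
  convex_univ.norm_image_sub_le_of_norm_fderiv_le (𝕜 := ℝ)
    (fun x _ => (hf.differentiable (by norm_num)).differentiableAt) (fun x _ => h1 x)
    (Set.mem_univ y) (Set.mem_univ x)

lemma dlip_of_bd {E F : Type*} [NormedAddCommGroup E] [NormedSpace ℝ E] [NormedAddCommGroup F]
    [NormedSpace ℝ F] {f : E → F} (hf : ContDiff ℝ 2 f) {C : ℝ}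
    (h2 : ∀ x, ‖iteratedFDeriv ℝ 2 f x‖ ≤ C) (x y : E) :
    ‖fderiv ℝ f x - fderiv ℝ f y‖ ≤ C * ‖x - y‖ := by
  have hd : ContDiff ℝ 1 (fderiv ℝ f) := hf.fderiv_right (by norm_num)
  refine convex_univ.norm_image_sub_le_of_norm_fderiv_le (𝕜 := ℝ)
    (fun x _ => (hd.differentiable (by norm_num)).differentiableAt) (fun x _ => ?_)
    (Set.mem_univ y) (Set.mem_univ x)
  rw [← norm_iteratedFDeriv_one, norm_iteratedFDeriv_fderiv]
  exact h2 x

lemma tay_of_bd {E F : Type*} [NormedAddCommGroup E] [NormedSpace ℝ E] [NormedAddCommGroup F]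
    [NormedSpace ℝ F] {f : E → F} (hf : ContDiff ℝ 2 f) {C : ℝ} (hC : 0 ≤ C)
    (h2 : ∀ x, ‖iteratedFDeriv ℝ 2 f x‖ ≤ C) (x y : E) :
    ‖f y - f x - fderiv ℝ f x (y - x)‖ ≤ C * ‖y - x‖ ^ 2 := by
  have := (convex_closedBall x ‖y - x‖).norm_image_sub_le_of_norm_fderiv_le' (𝕜 := ℝ)
    (f := f) (C := C * ‖y - x‖) (x := x) (y := y) (φ := fderiv ℝ f x)
    (fun x _ => (hf.differentiable (by norm_num)).differentiableAt) (fun w hw => by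
      refine (dlip_of_bd hf h2 w x).trans (mul_le_mul_of_nonneg_left ?_ hC)
      rw [← dist_eq_norm]; exact hw)
    (by simp) (by simp [dist_eq_norm])
  refine this.trans (le_of_eq ?_)
  ring

structure Reg {d m : ℕ} (f : (Fin d → ℝ) → Fin d → ℝ)
    (g : (Fin d → ℝ) → Fin d → Fin m → ℝ) (C : ℝ) : Prop where
  one : 1 ≤ C
  fcont : Continuous f
  gcont : Continuous g
  hcont : ∀ i j k, Continuous fun x => milsteinH g x i j k
  fgrow : ∀ x, ‖f x‖ ≤ C * (1 + ‖x‖)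
  ggrow : ∀ x, ‖g x‖ ≤ C * (1 + ‖x‖)
  flip : ∀ x y, ‖f x - f y‖ ≤ C * ‖x - y‖
  glip : ∀ x y, ‖g x - g y‖ ≤ C * ‖x - y‖
  ftay : ∀ x y, ‖f y - f x - fderiv ℝ f x (y - x)‖ ≤ C * ‖y - x‖ ^ 2
  gtay : ∀ x y, ‖g y - g x - fderiv ℝ g x (y - x)‖ ≤ C * ‖y - x‖ ^ 2
  fd : ∀ x v, ‖fderiv ℝ f x v‖ ≤ C * ‖v‖
  gd : ∀ x v, ‖fderiv ℝ g x v‖ ≤ C * ‖v‖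
  hgrow : ∀ x i j k, |milsteinH g x i j k| ≤ C * (1 + ‖x‖)
  hlip : ∀ x y i j k, |milsteinH g x i j k - milsteinH g y i j k|
    ≤ C * (1 + ‖x‖ + ‖y‖) * ‖x - y‖
  hD : ∀ x (v : Fin m → ℝ) i k, (fderiv ℝ g x (fun l => ∑ j, g x l j * v j)) i k
    = 2 * ∑ j, milsteinH g x i j k * v j

lemma milsteinH_eq {d m : ℕ} {g : (Fin d → ℝ) → Fin d → Fin m → ℝ} (hg : ContDiff ℝ 2 g)
    (x : Fin d → ℝ) (i : Fin d) (j k : Fin m) :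
    milsteinH g x i j k = 1 / 2 * (fderiv ℝ g x (fun l => g x l j)) i k := by
  unfold milsteinH
  have hd : DifferentiableAt ℝ g x := (hg.differentiable (by norm_num)).differentiableAt
  have h1 : fderiv ℝ (fun y => g y i k) x = (ContinuousLinearMap.proj k).comp
      ((ContinuousLinearMap.proj i).comp (fderiv ℝ g x)) := by
    have hi : DifferentiableAt ℝ (fun y => g y i) x := differentiableAt_pi.1 hd i
    rw [← fderiv_apply hd i, ← fderiv_apply hi k]
  have h2 : (fun l => g x l j) = ∑ l, g x l j • (Pi.single l 1 : Fin d → ℝ) := by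
    funext l
    simp [Finset.sum_apply, Pi.single_apply]
  rw [h1, h2, map_sum]
  simp [Finset.sum_apply]

lemma reg_exists {d m : ℕ} (f : (Fin d → ℝ) → Fin d → ℝ) (g : (Fin d → ℝ) → Fin d → Fin m → ℝ)
    (hf : ContDiff ℝ 2 f) (hg : ContDiff ℝ 2 g) (Cfg : ℝ)
    (hf1 : ∀ x, ‖fderiv ℝ f x‖ ≤ Cfg) (hf2 : ∀ x, ‖iteratedFDeriv ℝ 2 f x‖ ≤ Cfg)
    (hg1 : ∀ x, ‖fderiv ℝ g x‖ ≤ Cfg) (hg2 : ∀ x, ‖iteratedFDeriv ℝ 2 g x‖ ≤ Cfg) (M : ℝ) :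
    ∃ C, M ≤ C ∧ Reg f g C := by
  have hC0 : 0 ≤ Cfg := (norm_nonneg _).trans (hf1 0)
  set G := 1 + Cfg + ‖f 0‖ + ‖g 0‖ with hG
  have hG1 : 1 ≤ G := by rw [hG]; linarith [norm_nonneg (f 0), norm_nonneg (g 0)]
  have hGC : Cfg ≤ G := by rw [hG]; linarith [norm_nonneg (f 0), norm_nonneg (g 0)]
  have hGG : G ≤ G ^ 2 + |M| := by nlinarith [abs_nonneg M]
  have hGG0 : Cfg ≤ G ^ 2 + |M| := hGC.trans hGG
  have fgrow : ∀ x, ‖f x‖ ≤ G * (1 + ‖x‖) := fun x => by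
    have := lip_of_bd hf hf1 x 0
    have h2 : ‖f x‖ ≤ ‖f x - f 0‖ + ‖f 0‖ := by simpa using norm_add_le (f x - f 0) (f 0)
    rw [sub_zero] at this
    have h3 : Cfg * ‖x‖ ≤ G * ‖x‖ := by gcongr
    have h4 : ‖f 0‖ ≤ G := by rw [hG]; linarith [norm_nonneg (f 0), norm_nonneg (g 0)]
    linarith
  have ggrow : ∀ x, ‖g x‖ ≤ G * (1 + ‖x‖) := fun x => by
    have := lip_of_bd hg hg1 x 0
    have h2 : ‖g x‖ ≤ ‖g x - g 0‖ + ‖g 0‖ := by simpa using norm_add_le (g x - g 0) (g 0)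
    rw [sub_zero] at this
    have h3 : Cfg * ‖x‖ ≤ G * ‖x‖ := by gcongr
    have h4 : ‖g 0‖ ≤ G := by rw [hG]; linarith [norm_nonneg (f 0), norm_nonneg (g 0)]
    linarith
  have col : ∀ (M : Fin d → Fin m → ℝ) (j : Fin m), ‖fun l => M l j‖ ≤ ‖M‖ := fun M j => by
    rw [pi_norm_le_iff_of_nonneg (norm_nonneg _)]
    exact fun l => (norm_le_pi_norm (M l) j).trans (norm_le_pi_norm M l)
  have ent : ∀ (M : Fin d → Fin m → ℝ) i k, |M i k| ≤ ‖M‖ := fun M i k =>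
    (norm_le_pi_norm (M i) k).trans (norm_le_pi_norm M i)
  refine ⟨G ^ 2 + |M|, by nlinarith [le_abs_self M], ?_⟩
  refine ⟨hG1.trans hGG, hf.continuous, hg.continuous, ?_, ?_, ?_, ?_, ?_, ?_, ?_, ?_, ?_, ?_, ?_, ?_⟩
  · intro i j k
    simp only [milsteinH_eq hg]
    have h1 : Continuous (fderiv ℝ g) := hg.continuous_fderiv (by norm_num)
    have h2 : Continuous fun x => (fun l => g x l j) := by
      have := hg.continuous
      fun_prop
    have h3 := h1.clm_apply h2
    fun_prop
  · intro x; exact (fgrow x).trans (by gcongr)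
  · intro x; exact (ggrow x).trans (by gcongr)
  · intro x y; exact (lip_of_bd hf hf1 x y).trans (by gcongr)
  · intro x y; exact (lip_of_bd hg hg1 x y).trans (by gcongr)
  · intro x y; exact (tay_of_bd hf hC0 hf2 x y).trans (by gcongr)
  · intro x y; exact (tay_of_bd hg hC0 hg2 x y).trans (by gcongr)
  · intro x v; exact (ContinuousLinearMap.le_of_opNorm_le _ (hf1 x) v).trans (by gcongr)
  · intro x v; exact (ContinuousLinearMap.le_of_opNorm_le _ (hg1 x) v).trans (by gcongr)
  · intro x i j k
    rw [milsteinH_eq hg, abs_mul]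
    have h1 := ent (fderiv ℝ g x (fun l => g x l j)) i k
    have h2 := ContinuousLinearMap.le_of_opNorm_le _ (hg1 x) (fun l => g x l j)
    have h3 := (col (g x) j).trans (ggrow x)
    have h4 : Cfg * ‖fun l => g x l j‖ ≤ G * (G * (1 + ‖x‖)) := by gcongr
    have h5 : 0 ≤ |M| * (1 + ‖x‖) := by positivity
    have h6 : 0 ≤ G * (G * (1 + ‖x‖)) := by positivity
    rw [abs_of_pos (by norm_num : (0:ℝ) < 1 / 2)]
    nlinarith
  · intro x y i j k
    rw [milsteinH_eq hg, milsteinH_eq hg, ← mul_sub, abs_mul]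
    have e : fderiv ℝ g x (fun l => g x l j) - fderiv ℝ g y (fun l => g y l j)
        = (fderiv ℝ g x - fderiv ℝ g y) (fun l => g x l j)
          + fderiv ℝ g y (fun l => (g x - g y) l j) := by
      have : (fun l => (g x - g y) l j) = (fun l => g x l j) - fun l => g y l j := by
        funext l; simp
      rw [this, map_sub]; simp
    have h1 := ent (fderiv ℝ g x (fun l => g x l j) - fderiv ℝ g y (fun l => g y l j)) i k
    rw [e] at h1
    have h2 := h1.trans (norm_add_le _ _)
    have h3 := ContinuousLinearMap.le_of_opNorm_le _ (dlip_of_bd hg hg2 x y) (fun l => g x l j)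
    have h4 := ContinuousLinearMap.le_of_opNorm_le _ (hg1 y) (fun l => (g x - g y) l j)
    have h5 := (col (g x) j).trans (ggrow x)
    have h6 := (col (g x - g y) j).trans (lip_of_bd hg hg1 x y)
    have h7 : Cfg * ‖x - y‖ * ‖fun l => g x l j‖ ≤ G * ‖x - y‖ * (G * (1 + ‖x‖)) := by gcongr
    have h8 : Cfg * ‖fun l => (g x - g y) l j‖ ≤ G * (G * ‖x - y‖) := by
      have : Cfg * ‖x - y‖ ≤ G * ‖x - y‖ := by gcongr
      have := h6.trans this
      gcongr
    rw [← e] at h2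
    rw [abs_of_pos (by norm_num : (0:ℝ) < 1 / 2), ← Pi.sub_apply, ← Pi.sub_apply]
    have h9 : 0 ≤ |M| * (1 + ‖x‖ + ‖y‖) * ‖x - y‖ := by positivity
    have h10 : 0 ≤ G ^ 2 * ‖y‖ * ‖x - y‖ := by positivity
    have h11 : 0 ≤ G ^ 2 * ‖x‖ * ‖x - y‖ := by positivity
    nlinarith
  · intro x v i k
    have h2 : (fun l => ∑ j, g x l j * v j) = ∑ j, v j • (fun l => g x l j) := by
      funext l
      simp [Finset.sum_apply, mul_comm]
    rw [h2, map_sum]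
    simp only [milsteinH_eq hg, Finset.sum_apply, map_smul, Pi.smul_apply, smul_eq_mul]
    rw [Finset.mul_sum]
    refine Finset.sum_congr rfl fun j _ => ?_
    ring

end AM

namespace AM

lemma ent_le {d m : ℕ} (M : Fin d → Fin m → ℝ) (i : Fin d) (k : Fin m) : |M i k| ≤ ‖M‖ :=
  (norm_le_pi_norm (M i) k).trans (norm_le_pi_norm M i)

lemma sum_bd {n : ℕ} {a : Fin n → ℝ} {A : ℝ} (h : ∀ i, |a i| ≤ A) : |∑ i, a i| ≤ n * A := by
  refine (Finset.abs_sum_le_sum_abs _ _).trans ?_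
  refine (Finset.sum_le_sum fun i _ => h i).trans ?_
  simp

lemma quad_bd {m : ℕ} {ξ : Fin m → ℝ} {q : ℝ} (hq : 1 ≤ q) (h : ∀ j, |ξ j| ≤ q) (j k : Fin m) :
    |ξ j * ξ k - if j = k then 1 / 2 else 0| ≤ 2 * q ^ 2 := by
  have h1 : |ξ j * ξ k| ≤ q * q := by
    rw [abs_mul]; exact mul_le_mul (h j) (h k) (abs_nonneg _) (by linarith)
  have h2 : |if j = k then (1 / 2 : ℝ) else 0| ≤ 1 := by split_ifs <;> norm_num [abs_of_pos]
  have h3 := abs_sub (ξ j * ξ k) (if j = k then (1 / 2 : ℝ) else 0)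
  nlinarith

/-- half step in scaled noise -/
noncomputable def mid {d m : ℕ} (f : (Fin d → ℝ) → Fin d → ℝ)
    (g : (Fin d → ℝ) → Fin d → Fin m → ℝ) (η : ℝ) (x : Fin d → ℝ) (ξ : Fin m → ℝ) : Fin d → ℝ :=
  milsteinStep f g (η ^ 2 / 2) x (fun j => η * ξ j)

lemma mid_apply {d m : ℕ} (f : (Fin d → ℝ) → Fin d → ℝ)
    (g : (Fin d → ℝ) → Fin d → Fin m → ℝ) (η : ℝ) (x : Fin d → ℝ) (ξ : Fin m → ℝ) (i : Fin d) :
    mid f g η x ξ i = x i + η ^ 2 * (1 / 2 * f x i) + η * (∑ j, g x i j * ξ j)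
      + η ^ 2 * ∑ j, ∑ k, milsteinH g x i j k * (ξ j * ξ k - if j = k then 1 / 2 else 0) := by
  unfold mid milsteinStep
  simp only [Finset.mul_sum]
  congr 1
  · congr 1
    · ring
    · exact Finset.sum_congr rfl fun j _ => by ring
  · refine Finset.sum_congr rfl fun j _ => Finset.sum_congr rfl fun k _ => ?_
    split_ifs <;> ring

section
variable {d m : ℕ} {f : (Fin d → ℝ) → Fin d → ℝ} {g : (Fin d → ℝ) → Fin d → Fin m → ℝ} {C : ℝ}

lemma mid_cont (R : Reg f g C) (η : ℝ) (x : Fin d → ℝ) : Continuous (mid f g η x) := by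
  rw [continuous_pi_iff]
  intro i
  simp only [mid_apply]
  fun_prop

lemma gxi_bd (R : Reg f g C) {x : Fin d → ℝ} {ξ : Fin m → ℝ} {q L : ℝ}
    (hq : 1 ≤ q) (h : ∀ j, |ξ j| ≤ q) (hL : 1 + ‖x‖ ≤ L) :
    ‖fun l => ∑ j, g x l j * ξ j‖ ≤ m * C * L * q := by
  have h1 := R.one
  have hL0 : 0 ≤ L := by linarith [norm_nonneg x]
  rw [pi_norm_le_iff_of_nonneg (by positivity)]
  intro l
  have : |∑ j, g x l j * ξ j| ≤ m * (C * L * q) := by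
    apply sum_bd
    intro j
    rw [abs_mul]
    have h2 : |g x l j| ≤ C * L := (ent_le _ _ _).trans ((R.ggrow x).trans (by gcongr))
    exact mul_le_mul h2 (h j) (abs_nonneg _) (by positivity)
  rw [Real.norm_eq_abs]
  linarith

lemma mid_bd2 (R : Reg f g C) {η : ℝ} {x : Fin d → ℝ} {ξ : Fin m → ℝ} {q L : ℝ}
    (hq : 1 ≤ q) (h : ∀ j, |ξ j| ≤ q) (hL : 1 + ‖x‖ ≤ L) :
    ‖mid f g η x ξ - x - η • (fun l => ∑ j, g x l j * ξ j)‖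
      ≤ (C + 2 * m ^ 2 * C) * (η ^ 2 * L) * q ^ 2 := by
  have h1 := R.one
  have hL0 : 0 ≤ L := by linarith [norm_nonneg x]
  rw [pi_norm_le_iff_of_nonneg (by positivity)]
  intro i
  have e : (mid f g η x ξ - x - η • (fun l => ∑ j, g x l j * ξ j)) i
      = η ^ 2 * ((1 / 2 * f x i) + ∑ j, ∑ k, milsteinH g x i j k
        * (ξ j * ξ k - if j = k then 1 / 2 else 0)) := by
    simp only [Pi.sub_apply, Pi.smul_apply, smul_eq_mul, mid_apply]; ring
  rw [e, Real.norm_eq_abs, abs_mul, abs_of_nonneg (sq_nonneg η)]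
  have b1 : |f x i| ≤ C * L := (norm_le_pi_norm (f x) i).trans ((R.fgrow x).trans (by gcongr))
  have b2 : |∑ j, ∑ k, milsteinH g x i j k * (ξ j * ξ k - if j = k then 1 / 2 else 0)|
      ≤ m * (m * (C * L * (2 * q ^ 2))) := by
    refine sum_bd fun j => sum_bd fun k => ?_
    rw [abs_mul]
    have h2 : |milsteinH g x i j k| ≤ C * L := (R.hgrow _ _ _ _).trans (by gcongr)
    exact mul_le_mul h2 (quad_bd hq h j k) (abs_nonneg _) (by positivity)
  have b3 := abs_add_le (1 / 2 * f x i) (∑ j, ∑ k, milsteinH g x i j k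
        * (ξ j * ξ k - if j = k then 1 / 2 else 0))
  have b4 : |1 / 2 * f x i| ≤ C * L * q ^ 2 := by
    rw [abs_mul, abs_of_pos (by norm_num : (0:ℝ) < 1 / 2)]
    have : 1 ≤ q ^ 2 := one_le_pow₀ hq
    have : C * L * 1 ≤ C * L * q ^ 2 := by gcongr
    have := abs_nonneg (f x i)
    linarith
  calc _ ≤ η ^ 2 * (C * L * q ^ 2 + m * (m * (C * L * (2 * q ^ 2)))) := by
        gcongr; linarith
    _ = _ := by ring

lemma mid_bd1 (R : Reg f g C) {η : ℝ} (hη : 0 ≤ η) (hηC : η ≤ C) {x : Fin d → ℝ} {ξ : Fin m → ℝ}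
    {q L : ℝ} (hq : 1 ≤ q) (h : ∀ j, |ξ j| ≤ q) (hL : 1 + ‖x‖ ≤ L) :
    ‖mid f g η x ξ - x‖ ≤ ((C + 2 * m ^ 2 * C) * C + m * C) * (η * L) * q ^ 2 := by
  have h1 := R.one
  have hL0 : 0 ≤ L := by linarith [norm_nonneg x]
  have a := mid_bd2 R (η := η) hq h hL
  have b := gxi_bd R hq h hL
  have e : mid f g η x ξ - x = (mid f g η x ξ - x - η • (fun l => ∑ j, g x l j * ξ j))
      + η • (fun l => ∑ j, g x l j * ξ j) := by abel
  rw [e]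
  refine (norm_add_le _ _).trans ?_
  rw [norm_smul, Real.norm_of_nonneg hη]
  have c1 : (C + 2 * m ^ 2 * C) * (η ^ 2 * L) * q ^ 2 ≤ (C + 2 * m ^ 2 * C) * (C * η * L) * q ^ 2 := by
    gcongr; nlinarith
  have c2 : η * (m * C * L * q) ≤ η * (m * C * L * q ^ 2) := by
    gcongr; nlinarith
  calc _ ≤ (C + 2 * m ^ 2 * C) * (C * η * L) * q ^ 2 + η * (m * C * L * q ^ 2) := by
        have : η * ‖fun l => ∑ j, g x l j * ξ j‖ ≤ η * (m * C * L * q) := by gcongr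
        linarith
    _ = _ := by ring

/-- The Taylor remainder constant. -/
lemma rho_bd (R : Reg f g C) : ∃ C2, 0 ≤ C2 ∧ ∀ {G : Type} [NormedAddCommGroup G]
    [NormedSpace ℝ G] (F : (Fin d → ℝ) → G) (_ : ∀ x y, ‖F x - F y‖ ≤ C * ‖x - y‖)
    (_ : ∀ x y, ‖F y - F x - fderiv ℝ F x (y - x)‖ ≤ C * ‖y - x‖ ^ 2)
    (_ : ∀ x v, ‖fderiv ℝ F x v‖ ≤ C * ‖v‖)
    {η : ℝ} (_ : 0 ≤ η) (_ : η ≤ C) {x : Fin d → ℝ} {ξ : Fin m → ℝ}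
    {q L : ℝ} (_ : 1 ≤ q) (_ : ∀ j, |ξ j| ≤ q) (_ : 1 + ‖x‖ ≤ L),
    ‖F (mid f g η x ξ) - F x - η • fderiv ℝ F x (fun l => ∑ j, g x l j * ξ j)‖
      ≤ C2 * min (η * L) ((η * L) ^ 2) * q ^ 4 := by
  have h1 := R.one
  set C0 := C + 2 * m ^ 2 * C with hC0
  have hC00 : 0 ≤ C0 := by positivity
  set C1 := C0 * C + m * C with hC1
  have hC10 : 0 ≤ C1 := by positivity
  refine ⟨C * C1 + C * (m * C) + (C * C1 ^ 2 + C * C0), by positivity, ?_⟩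
  intro G _ _ F lip tay der η hη hηC x ξ q L hq h hL
  have hL0 : 0 ≤ L := by linarith [norm_nonneg x]
  have hL1 : 1 ≤ L := by linarith [norm_nonneg x]
  have d1 := mid_bd1 R hη hηC hq h hL
  have d2 := mid_bd2 R (η := η) hq h hL
  have d3 := gxi_bd R hq h hL
  rw [← hC0] at d1 d2
  rw [← hC1] at d1
  set θ := η * L with hθ
  have hθ0 : 0 ≤ θ := by positivity
  have q1 : q ≤ q ^ 4 := by simpa using pow_le_pow_right₀ hq (by norm_num : 1 ≤ 4)
  have q2 : q ^ 2 ≤ q ^ 4 := pow_le_pow_right₀ hq (by norm_num)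
  set v := (fun l => ∑ j, g x l j * ξ j) with hv
  set y := mid f g η x ξ with hy
  have B1 : ‖F y - F x - η • fderiv ℝ F x v‖ ≤ (C * C1 + C * (m * C)) * θ * q ^ 4 := by
    refine (norm_sub_le _ _).trans ?_
    rw [norm_smul, Real.norm_of_nonneg hη]
    have t1 : ‖F y - F x‖ ≤ C * (C1 * θ * q ^ 4) :=
      (lip y x).trans (by gcongr; exact d1.trans (by gcongr))
    have t2 : η * ‖fderiv ℝ F x v‖ ≤ η * (C * (m * C * L * q ^ 4)) := by
      gcongr; exact (der x v).trans (by gcongr; exact d3.trans (by gcongr))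
    calc _ ≤ C * (C1 * θ * q ^ 4) + η * (C * (m * C * L * q ^ 4)) := add_le_add t1 t2
      _ = _ := by rw [hθ]; ring
  have B2 : ‖F y - F x - η • fderiv ℝ F x v‖ ≤ (C * C1 ^ 2 + C * C0) * θ ^ 2 * q ^ 4 := by
    have e : F y - F x - η • fderiv ℝ F x v = (F y - F x - fderiv ℝ F x (y - x))
        + fderiv ℝ F x (y - x - η • v) := by
      rw [map_sub (fderiv ℝ F x) (y - x) (η • v), map_smul]; abel
    rw [e]
    refine (norm_add_le _ _).trans ?_
    have t1 : ‖F y - F x - fderiv ℝ F x (y - x)‖ ≤ C * (C1 * θ * q ^ 2) ^ 2 :=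
      (tay x y).trans (by gcongr)
    have t2 : ‖fderiv ℝ F x (y - x - η • v)‖ ≤ C * (C0 * θ ^ 2 * q ^ 4) := by
      refine (der x _).trans ?_
      gcongr
      refine d2.trans ?_
      have : η ^ 2 * L ≤ θ ^ 2 := by
        rw [hθ, mul_pow]; gcongr; nlinarith
      gcongr
    calc _ ≤ C * (C1 * θ * q ^ 2) ^ 2 + C * (C0 * θ ^ 2 * q ^ 4) := add_le_add t1 t2
      _ = _ := by ring
  have q40 : 0 ≤ q ^ 4 := by positivity
  rcases le_total θ (θ ^ 2) with hm | hm
  · rw [min_eq_left hm]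
    refine B1.trans ?_
    have h : 0 ≤ C * C1 ^ 2 + C * C0 := by positivity
    exact mul_le_mul_of_nonneg_right (mul_le_mul_of_nonneg_right (by linarith) hθ0) q40
  · rw [min_eq_right hm]
    refine B2.trans ?_
    have h : 0 ≤ C * C1 + C * (m * C) := by positivity
    exact mul_le_mul_of_nonneg_right (mul_le_mul_of_nonneg_right (by linarith) (sq_nonneg θ)) q40

lemma hrho_bd (R : Reg f g C) : ∃ C3, 0 ≤ C3 ∧ ∀ i j k
    {η : ℝ} (_ : 0 ≤ η) (_ : η ≤ C) {x : Fin d → ℝ} {ξ : Fin m → ℝ}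
    {q L : ℝ} (_ : 1 ≤ q) (_ : ∀ j, |ξ j| ≤ q) (_ : 1 + ‖x‖ ≤ L),
    |η * (milsteinH g (mid f g η x ξ) i j k - milsteinH g x i j k)|
      ≤ C3 * min (η * L) ((η * L) ^ 2) * q ^ 4 := by
  have h1 := R.one
  set C0 := C + 2 * m ^ 2 * C with hC0
  have hC00 : 0 ≤ C0 := by positivity
  set C1 := C0 * C + m * C with hC1
  have hC10 : 0 ≤ C1 := by positivity
  refine ⟨C * (2 + C * C1) + C * C1 * (2 + C * C1), by positivity, ?_⟩
  intro i j k η hη hηC x ξ q L hq h hL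
  have hL0 : 0 ≤ L := by linarith [norm_nonneg x]
  have hL1 : 1 ≤ L := by linarith [norm_nonneg x]
  have d1 := mid_bd1 R hη hηC hq h hL
  rw [← hC0, ← hC1] at d1
  set θ := η * L with hθ
  have hθ0 : 0 ≤ θ := by positivity
  have hθC : θ ≤ C * L := by rw [hθ]; gcongr
  have q1 : 1 ≤ q ^ 2 := one_le_pow₀ hq
  have q2 : q ^ 2 ≤ q ^ 4 := pow_le_pow_right₀ hq (by norm_num)
  set y := mid f g η x ξ with hy
  have ny : ‖y‖ ≤ ‖x‖ + ‖y - x‖ := by simpa using norm_add_le x (y - x)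
  have d1' : ‖y - x‖ ≤ C1 * (C * L) * q ^ 2 := d1.trans (by gcongr)
  have s1 : 1 + ‖y‖ + ‖x‖ ≤ (2 + C * C1) * L * q ^ 2 := by
    have : 2 * L * 1 ≤ 2 * L * q ^ 2 := by gcongr
    nlinarith
  rw [abs_mul, abs_of_nonneg hη]
  have B1 : η * |milsteinH g y i j k - milsteinH g x i j k| ≤ C * (2 + C * C1) * θ * q ^ 4 := by
    have t := abs_sub (milsteinH g y i j k) (milsteinH g x i j k)
    have t1 := R.hgrow y i j k
    have t2 := R.hgrow x i j k
    have t3 : |milsteinH g y i j k - milsteinH g x i j k| ≤ C * (2 + C * C1) * L * q ^ 4 := by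
      have u1 : (1 + ‖y‖) + (1 + ‖x‖) ≤ (2 + C * C1) * L * q ^ 2 := by
        have : 2 * L * 1 ≤ 2 * L * q ^ 2 := by gcongr
        nlinarith
      calc _ ≤ C * ((1 + ‖y‖) + (1 + ‖x‖)) := by linarith
        _ ≤ C * ((2 + C * C1) * L * q ^ 4) := by gcongr; exact u1.trans (by gcongr)
        _ = _ := by ring
    calc _ ≤ η * (C * (2 + C * C1) * L * q ^ 4) := by gcongr
      _ = _ := by rw [hθ]; ring
  have B2 : η * |milsteinH g y i j k - milsteinH g x i j k|
      ≤ C * C1 * (2 + C * C1) * θ ^ 2 * q ^ 4 := by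
    have t3 := R.hlip y x i j k
    calc _ ≤ η * (C * (1 + ‖y‖ + ‖x‖) * ‖y - x‖) := by gcongr
      _ ≤ η * (C * ((2 + C * C1) * L * q ^ 2) * (C1 * θ * q ^ 2)) := by gcongr
      _ = _ := by rw [hθ]; ring
  have q40 : 0 ≤ q ^ 4 := by positivity
  rcases le_total θ (θ ^ 2) with hm | hm
  · rw [min_eq_left hm]
    refine B1.trans ?_
    gcongr
    have : 0 ≤ C * C1 * (2 + C * C1) := by positivity
    linarith
  · rw [min_eq_right hm]
    refine B2.trans ?_
    gcongr
    have : 0 ≤ C * (2 + C * C1) := by positivity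
    linarith

end

/-- common part of the increments -/
noncomputable def com {m : ℕ} (η a : ℝ) (b : Fin m → ℝ) (c : Fin m → Fin m → ℝ)
    (ξ : (Fin m → ℝ) × (Fin m → ℝ)) : ℝ :=
  η ^ 2 * a + ∑ j, η * (b j * (ξ.1 j + ξ.2 j))
    + ∑ j, ∑ k, η ^ 2 * (c j k * ((ξ.1 j + ξ.2 j) * (ξ.1 k + ξ.2 k) - if j = k then 1 else 0))

/-- antisymmetric part of the increments -/
noncomputable def ant {m : ℕ} (η : ℝ) (c : Fin m → Fin m → ℝ)
    (ξ : (Fin m → ℝ) × (Fin m → ℝ)) : ℝ :=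
  ∑ j, ∑ k, η ^ 2 * (c j k * (ξ.1 j * ξ.2 k - ξ.2 j * ξ.1 k))

lemma com_swap {m : ℕ} (η a : ℝ) (b : Fin m → ℝ) (c : Fin m → Fin m → ℝ)
    (ξ : (Fin m → ℝ) × (Fin m → ℝ)) : com η a b c ξ.swap = com η a b c ξ := by
  unfold com
  simp only [Prod.fst_swap, Prod.snd_swap, add_comm (ξ.2 _)]

lemma ant_swap {m : ℕ} (η : ℝ) (c : Fin m → Fin m → ℝ)
    (ξ : (Fin m → ℝ) × (Fin m → ℝ)) : ant η c ξ.swap = - ant η c ξ := by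
  unfold ant
  simp only [Prod.fst_swap, Prod.snd_swap, ← Finset.sum_neg_distrib]
  refine Finset.sum_congr rfl fun j _ => Finset.sum_congr rfl fun k _ => ?_
  ring

lemma com_lin {m : ℕ} (η a a' s t : ℝ) (b b' : Fin m → ℝ) (c c' : Fin m → Fin m → ℝ)
    (ξ : (Fin m → ℝ) × (Fin m → ℝ)) : com η (s * a + t * a') (fun j => s * b j + t * b' j)
      (fun j k => s * c j k + t * c' j k) ξ = s * com η a b c ξ + t * com η a' b' c' ξ := by
  unfold com
  simp only [mul_add, Finset.mul_sum]
  rw [show ∀ A B D A' B' D' : ℝ, A + B + D + (A' + B' + D') = (A + A') + (B + B') + (D + D') by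
    intros; ring]
  simp only [← Finset.sum_add_distrib]
  congr 1
  · congr 1
    · ring
    · exact Finset.sum_congr rfl fun j _ => by ring
  · refine Finset.sum_congr rfl fun j _ => Finset.sum_congr rfl fun k _ => ?_
    ring

lemma ant_lin {m : ℕ} (η s t : ℝ) (c c' : Fin m → Fin m → ℝ)
    (ξ : (Fin m → ℝ) × (Fin m → ℝ)) : ant η
      (fun j k => s * c j k + t * c' j k) ξ = s * ant η c ξ + t * ant η c' ξ := by
  unfold ant
  simp only [Finset.mul_sum]
  simp only [← Finset.sum_add_distrib]
  refine Finset.sum_congr rfl fun j _ => Finset.sum_congr rfl fun k _ => ?_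
  ring

lemma dec_lin {m : ℕ} {η A b : ℝ} (hb : |b| ≤ A) (j : Fin m) :
    Dec η A (fun ξ : (Fin m → ℝ) × (Fin m → ℝ) => η * (b * ξ.2 j)) := by
  have hA := (abs_nonneg b).trans hb
  refine Dec.mart hA (Ψ := fun _ => b) (ψ := fun ξ => ξ j) (by fun_prop) (by fun_prop)
    (gam_int_coord m j) fun ξ => ?_
  rw [abs_mul]
  have h1 := Q_snd ξ j
  have h2 : Q ξ ≤ Q ξ ^ 6 := by simpa using Q_pow_mono ξ (by norm_num : 1 ≤ 6)
  exact mul_le_mul hb (h1.trans h2) (abs_nonneg _) hA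

lemma dec_lin1 {m : ℕ} {η A b : ℝ} (hb : |b| ≤ A) (j : Fin m) :
    Dec η A (fun ξ : (Fin m → ℝ) × (Fin m → ℝ) => η * (b * ξ.1 j)) :=
  (dec_lin hb j).swap

lemma dec_cross {m : ℕ} {η A b : ℝ} (hb : |η * b| ≤ A) (j k : Fin m) :
    Dec η A (fun ξ : (Fin m → ℝ) × (Fin m → ℝ) => η ^ 2 * (b * (ξ.1 j * ξ.2 k))) := by
  have hA := (abs_nonneg _).trans hb
  have := Dec.mart (η := η) hA (Ψ := fun ξ : Fin m → ℝ => (η * b) * ξ j) (ψ := fun ξ => ξ k)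
    (by fun_prop) (by fun_prop)
    (gam_int_coord m k) fun ξ => by
      rw [abs_mul, abs_mul, mul_assoc]
      have h1 := Q_fst ξ j
      have h3 := Q_snd ξ k
      have h2 : Q ξ * Q ξ ≤ Q ξ ^ 6 := by
        rw [← pow_two]; exact Q_pow_mono ξ (by norm_num : 2 ≤ 6)
      have h4 : |ξ.1 j| * |ξ.2 k| ≤ Q ξ * Q ξ :=
        mul_le_mul h1 h3 (abs_nonneg _) (by linarith [Q_one ξ])
      exact mul_le_mul hb (h4.trans h2) (by positivity) hA
  exact this.congr fun ξ => by ring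

lemma dec_quad {m : ℕ} {η A b : ℝ} (hb : |η * b| ≤ A) (j k : Fin m) :
    Dec η (2 * A) (fun ξ : (Fin m → ℝ) × (Fin m → ℝ) =>
      η ^ 2 * (b * (ξ.2 j * ξ.2 k - if j = k then 1 / 2 else 0))) := by
  have hA := (abs_nonneg _).trans hb
  have := Dec.mart (η := η) (by positivity : 0 ≤ 2 * A) (Ψ := fun ξ : Fin m → ℝ => (η * b))
    (ψ := fun ξ => (ξ j * ξ k - if j = k then 1 / 2 else 0))
    (by fun_prop) (by fun_prop)
    (gam_int_quad m j k) fun ξ => by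
      rw [abs_mul]
      have h1 := quad_bd (Q_one ξ) (Q_snd ξ) j k
      have h2 : Q ξ ^ 2 ≤ Q ξ ^ 6 := Q_pow_mono ξ (by norm_num : 2 ≤ 6)
      calc _ ≤ A * (2 * Q ξ ^ 2) := mul_le_mul hb h1 (abs_nonneg _) hA
        _ ≤ A * (2 * Q ξ ^ 6) := by gcongr
        _ = _ := by ring
  exact this.congr fun ξ => by ring

lemma dec_com {m : ℕ} {η A a : ℝ} {b : Fin m → ℝ} {c : Fin m → Fin m → ℝ} (ha : |a| ≤ A)
    (hb : ∀ j, |b j| ≤ A) (hc : ∀ j k, |η * c j k| ≤ A) :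
    Dec η ((1 + 2 * m + 6 * m ^ 2) * A) (com η a b c) := by
  have hA := (abs_nonneg _).trans ha
  have h1 : Dec (m := m) η A (fun _ => η ^ 2 * a) := Dec.drift hA measurable_const fun ξ => by
    have : 1 ≤ Q ξ ^ 6 := one_le_pow₀ (Q_one ξ)
    nlinarith
  have h2 := Dec.sumC (m := m) (n := m) fun j => (dec_lin1 (η := η) (hb j) j).add (dec_lin (hb j) j)
  have h3 := Dec.sumC (m := m) (n := m) fun j => Dec.sumC (m := m) (n := m) fun k =>
    ((dec_quad (hc j k) j k).swap.add (dec_quad (hc j k) j k)).add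
      ((dec_cross (hc j k) j k).add (dec_cross (hc j k) j k).swap)
  refine (((h1.add h2).add h3).mono (le_of_eq (by ring))).congr fun ξ => ?_
  unfold com
  congr 1
  · congr 1
    exact Finset.sum_congr rfl fun j _ => by ring
  · refine Finset.sum_congr rfl fun j _ => Finset.sum_congr rfl fun k _ => ?_
    simp only [Prod.fst_swap, Prod.snd_swap]
    split_ifs <;> ring

lemma dec_ant {m : ℕ} {η A : ℝ} {c : Fin m → Fin m → ℝ} (hc : ∀ j k, |η * c j k| ≤ A) :
    Dec η (2 * m ^ 2 * A) (ant η c) := by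
  have h3 := Dec.sumC (m := m) (n := m) fun j => Dec.sumC (m := m) (n := m) fun k =>
      ((dec_cross (hc j k) j k).add ((dec_cross (hc j k) j k).swap.smul (-1)))
  refine (h3.mono (le_of_eq (by simp; ring))).congr fun ξ => ?_
  unfold ant
  refine Finset.sum_congr rfl fun j _ => Finset.sum_congr rfl fun k _ => ?_
  simp only [Prod.fst_swap, Prod.snd_swap]
  ring

/-- two fine steps -/
noncomputable def fine {d m : ℕ} (f : (Fin d → ℝ) → Fin d → ℝ)
    (g : (Fin d → ℝ) → Fin d → Fin m → ℝ) (η : ℝ) (x : Fin d → ℝ)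
    (ξ : (Fin m → ℝ) × (Fin m → ℝ)) : Fin d → ℝ := mid f g η (mid f g η x ξ.1) ξ.2

/-- the remainder of two fine steps -/
noncomputable def rem {d m : ℕ} (f : (Fin d → ℝ) → Fin d → ℝ)
    (g : (Fin d → ℝ) → Fin d → Fin m → ℝ) (η : ℝ) (x : Fin d → ℝ) (i : Fin d)
    (ξ : (Fin m → ℝ) × (Fin m → ℝ)) : ℝ :=
  fine f g η x ξ i - x i - com η (f x i) (g x i) (milsteinH g x i) ξ - ant η (milsteinH g x i) ξ

lemma rem_eq {d m : ℕ} {f : (Fin d → ℝ) → Fin d → ℝ} {g : (Fin d → ℝ) → Fin d → Fin m → ℝ} {C : ℝ}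
    (R : Reg f g C) (η : ℝ) (x : Fin d → ℝ) (i : Fin d) (ξ : (Fin m → ℝ) × (Fin m → ℝ)) :
    rem f g η x i ξ =
      η ^ 2 * (1 / 2 * (f (mid f g η x ξ.1) - f x
        - η • fderiv ℝ f x (fun l => ∑ j, g x l j * ξ.1 j)) i)
      + ∑ j, η * ((1 / 2 * η ^ 2 * fderiv ℝ f x (fun l => g x l j) i) * ξ.1 j)
      + ∑ k, η * ((g (mid f g η x ξ.1) - g x
        - η • fderiv ℝ g x (fun l => ∑ j, g x l j * ξ.1 j)) i k * ξ.2 k)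
      + ∑ j, ∑ k, η * ((η * (milsteinH g (mid f g η x ξ.1) i j k - milsteinH g x i j k))
          * (ξ.2 j * ξ.2 k - if j = k then 1 / 2 else 0)) := by
  have e1 : fderiv ℝ f x (fun l => ∑ j, g x l j * ξ.1 j) i
      = ∑ j, fderiv ℝ f x (fun l => g x l j) i * ξ.1 j := by
    have h2 : (fun l => ∑ j, g x l j * ξ.1 j) = ∑ j, ξ.1 j • (fun l => g x l j) := by
      funext l
      simp [Finset.sum_apply, mul_comm]
    rw [h2, map_sum]
    simp only [Finset.sum_apply, map_smul, Pi.smul_apply, smul_eq_mul, mul_comm]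
  have e2 : ∑ j, η * ((1 / 2 * η ^ 2 * fderiv ℝ f x (fun l => g x l j) i) * ξ.1 j)
      = η ^ 2 * (1 / 2 * (η * fderiv ℝ f x (fun l => ∑ j, g x l j * ξ.1 j) i)) := by
    rw [e1]; simp only [Finset.mul_sum]
    exact Finset.sum_congr rfl fun j _ => by ring
  rw [e2]
  unfold rem fine com ant
  rw [mid_apply, mid_apply]
  simp only [Pi.sub_apply, Pi.smul_apply, smul_eq_mul, R.hD]
  set y := mid f g η x ξ.1
  have e3 : ∑ k, η * ((g y i k - g x i k - η * (2 * ∑ j, milsteinH g x i j k * ξ.1 j)) * ξ.2 k)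
      = ∑ k, η * (g y i k * ξ.2 k) - ∑ k, η * (g x i k * ξ.2 k)
        - ∑ j, ∑ k, η ^ 2 * (2 * milsteinH g x i j k * ξ.1 j * ξ.2 k) := by
    rw [Finset.sum_comm (f := fun j k => η ^ 2 * (2 * milsteinH g x i j k * ξ.1 j * ξ.2 k)),
      ← Finset.sum_sub_distrib, ← Finset.sum_sub_distrib]
    refine Finset.sum_congr rfl fun k _ => ?_
    have : ∑ j, η ^ 2 * (2 * milsteinH g x i j k * ξ.1 j * ξ.2 k)
        = η ^ 2 * 2 * (∑ j, milsteinH g x i j k * ξ.1 j) * ξ.2 k := by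
      rw [Finset.mul_sum, Finset.sum_mul]
      exact Finset.sum_congr rfl fun j _ => by ring
    rw [this]; ring
  have e4 : ∑ j, η * (g x i j * (ξ.1 j + ξ.2 j)) = η * ∑ j, g x i j * ξ.1 j
      + ∑ k, η * (g x i k * ξ.2 k) := by
    rw [Finset.mul_sum, ← Finset.sum_add_distrib]
    exact Finset.sum_congr rfl fun j _ => by ring
  have e5 : η * ∑ j, g y i j * ξ.2 j = ∑ k, η * (g y i k * ξ.2 k) := by rw [Finset.mul_sum]
  have e6 : η ^ 2 * (∑ j, ∑ k, milsteinH g x i j k * (ξ.1 j * ξ.1 k - if j = k then 1 / 2 else 0))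
      + η ^ 2 * (∑ j, ∑ k, milsteinH g y i j k * (ξ.2 j * ξ.2 k - if j = k then 1 / 2 else 0))
      - (∑ j, ∑ k, η ^ 2 * (milsteinH g x i j k * ((ξ.1 j + ξ.2 j) * (ξ.1 k + ξ.2 k)
          - if j = k then 1 else 0)))
      - (∑ j, ∑ k, η ^ 2 * (milsteinH g x i j k * (ξ.1 j * ξ.2 k - ξ.2 j * ξ.1 k)))
      = (∑ j, ∑ k, η * ((η * (milsteinH g y i j k - milsteinH g x i j k))
          * (ξ.2 j * ξ.2 k - if j = k then 1 / 2 else 0)))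
        - ∑ j, ∑ k, η ^ 2 * (2 * milsteinH g x i j k * ξ.1 j * ξ.2 k) := by
    simp only [Finset.mul_sum, ← Finset.sum_sub_distrib, ← Finset.sum_add_distrib]
    refine Finset.sum_congr rfl fun j _ => Finset.sum_congr rfl fun k _ => ?_
    split_ifs <;> ring
  rw [e3, e4, e5]
  linear_combination e6

lemma dec_rem {d m : ℕ} {f : (Fin d → ℝ) → Fin d → ℝ} {g : (Fin d → ℝ) → Fin d → Fin m → ℝ} {C : ℝ}
    (R : Reg f g C) : ∃ C4, 0 ≤ C4 ∧ ∀ (η : ℝ) (x : Fin d → ℝ) (L : ℝ) (i : Fin d), 0 ≤ η → η ≤ C →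
      1 + ‖x‖ ≤ L → Dec η (C4 * min (η * L) ((η * L) ^ 2)) (rem f g η x i) := by
  have hC1 := R.one
  obtain ⟨C2, hC2, H2⟩ := rho_bd R
  obtain ⟨C3, hC3, H3⟩ := hrho_bd R
  refine ⟨C2 + m * (C ^ 3) + m * C2 + m * (m * (2 * C3)), by positivity, ?_⟩
  intro η x L i hη hηC hL
  have hL0 : 0 ≤ L := by linarith [norm_nonneg x]
  have hL1 : 1 ≤ L := by linarith [norm_nonneg x]
  set κ := min (η * L) ((η * L) ^ 2) with hκ
  have hκ0 : 0 ≤ κ := le_min (by positivity) (by positivity)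
  have hκη : η ^ 2 * L ≤ C * κ := by
    rw [hκ, mul_min_of_nonneg _ _ (by linarith)]
    refine le_min ?_ ?_
    · nlinarith [mul_nonneg hη hL0]
    · have : 0 ≤ η ^ 2 * L := by positivity
      have : η ^ 2 * L ≤ (η * L) ^ 2 := by nlinarith
      nlinarith [sq_nonneg (η * L)]
  have hmc := mid_cont R η x
  have hfc := R.fcont
  have hgc := R.gcont
  have hlin : Continuous fun ξ : Fin m → ℝ => (fun l => ∑ j, g x l j * ξ j) := by fun_prop
  have P1 : Dec (m := m) η (C2 * κ) (fun ξ => η ^ 2 * (1 / 2 * (f (mid f g η x ξ.1) - f x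
        - η • fderiv ℝ f x (fun l => ∑ j, g x l j * ξ.1 j)) i)) := by
    refine Dec.drift (by positivity) ?_ fun ξ => ?_
    · apply Continuous.measurable
      have h1 : Continuous fun ξ : (Fin m → ℝ) × (Fin m → ℝ) => f (mid f g η x ξ.1) := by fun_prop
      have h2 : Continuous fun ξ : (Fin m → ℝ) × (Fin m → ℝ) =>
        fderiv ℝ f x (fun l => ∑ j, g x l j * ξ.1 j) := by fun_prop
      fun_prop
    · have h1 := H2 f R.flip R.ftay R.fd hη hηC (Q_one ξ) (Q_fst ξ) hL
      have h2 := (norm_le_pi_norm _ i).trans h1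
      rw [Real.norm_eq_abs] at h2
      rw [abs_mul, abs_of_pos (by norm_num : (0:ℝ) < 1 / 2)]
      have h3 : C2 * κ * Q ξ ^ 4 ≤ C2 * κ * Q ξ ^ 6 := by
        gcongr
        · exact Q_one ξ
        · norm_num
      have h4 := abs_nonneg ((f (mid f g η x ξ.1) - f x
        - η • fderiv ℝ f x (fun l => ∑ j, g x l j * ξ.1 j)) i)
      linarith
  have P2 : Dec (m := m) η (m * (C ^ 3 * κ)) (fun ξ =>
      ∑ j, η * ((1 / 2 * η ^ 2 * fderiv ℝ f x (fun l => g x l j) i) * ξ.1 j)) := by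
    refine Dec.sumC fun j => dec_lin1 ?_ j
    have h1 : |fderiv ℝ f x (fun l => g x l j) i| ≤ C * (C * L) := by
      refine (norm_le_pi_norm _ i).trans ((R.fd _ _).trans ?_)
      gcongr
      rw [pi_norm_le_iff_of_nonneg (by positivity)]
      intro l
      exact (ent_le (g x) l j).trans ((R.ggrow x).trans (by gcongr))
    rw [abs_mul, abs_of_nonneg (by positivity : 0 ≤ 1 / 2 * η ^ 2)]
    calc 1 / 2 * η ^ 2 * |fderiv ℝ f x (fun l => g x l j) i| ≤ 1 * η ^ 2 * (C * (C * L)) := by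
          gcongr; norm_num
      _ = C ^ 2 * (η ^ 2 * L) := by ring
      _ ≤ C ^ 2 * (C * κ) := by gcongr
      _ = _ := by ring
  have P3 : Dec (m := m) η (m * (C2 * κ)) (fun ξ => ∑ k, η * ((g (mid f g η x ξ.1) - g x
        - η • fderiv ℝ g x (fun l => ∑ j, g x l j * ξ.1 j)) i k * ξ.2 k)) := by
    refine Dec.sumC fun k => Dec.mart (by positivity) (Ψ := fun ξ => (g (mid f g η x ξ) - g x
        - η • fderiv ℝ g x (fun l => ∑ j, g x l j * ξ j)) i k) (ψ := fun ξ => ξ k) ?_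
        (by fun_prop) (gam_int_coord m k) fun ξ => ?_
    · apply Continuous.measurable
      have h1 : Continuous fun ξ : (Fin m → ℝ) => g (mid f g η x ξ) := by fun_prop
      have h2 : Continuous fun ξ : (Fin m → ℝ) =>
        fderiv ℝ g x (fun l => ∑ j, g x l j * ξ j) := by fun_prop
      fun_prop
    · have h1 := H2 g R.glip R.gtay R.gd hη hηC (Q_one ξ) (Q_fst ξ) hL
      have h2 := (ent_le _ i k).trans h1
      have hQ := Q_one ξ
      rw [abs_mul]
      calc _ ≤ (C2 * κ * Q ξ ^ 4) * Q ξ := mul_le_mul h2 (Q_snd ξ k) (abs_nonneg _) (by positivity)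
        _ = C2 * κ * Q ξ ^ 5 := by ring
        _ ≤ C2 * κ * Q ξ ^ 6 := by
          gcongr
          norm_num
  have P4 : Dec (m := m) η (m * (m * (2 * C3 * κ))) (fun ξ =>
      ∑ j, ∑ k, η * ((η * (milsteinH g (mid f g η x ξ.1) i j k - milsteinH g x i j k))
          * (ξ.2 j * ξ.2 k - if j = k then 1 / 2 else 0))) := by
    refine Dec.sumC fun j => Dec.sumC fun k => Dec.mart (by positivity)
      (Ψ := fun ξ => (η * (milsteinH g (mid f g η x ξ) i j k - milsteinH g x i j k)))
      (ψ := fun ξ => (ξ j * ξ k - if j = k then 1 / 2 else 0)) ?_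
        (by fun_prop) (gam_int_quad m j k) fun ξ => ?_
    · apply Continuous.measurable
      have h1 : Continuous fun ξ : (Fin m → ℝ) => milsteinH g (mid f g η x ξ) i j k :=
        (R.hcont i j k).comp hmc
      fun_prop
    · have h2 := H3 i j k hη hηC (Q_one ξ) (Q_fst ξ) hL
      have hQ := Q_one ξ
      rw [abs_mul]
      calc _ ≤ (C3 * κ * Q ξ ^ 4) * (2 * Q ξ ^ 2) :=
            mul_le_mul h2 (quad_bd hQ (Q_snd ξ) j k) (abs_nonneg _) (by positivity)
        _ = 2 * C3 * κ * Q ξ ^ 6 := by ring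
  refine ((((P1.add P2).add P3).add P4).mono (le_of_eq (by ring))).congr fun ξ => ?_
  rw [rem_eq R]

end AM

namespace AM

/-- the coarse step -/
noncomputable def coarse {d m : ℕ} (f : (Fin d → ℝ) → Fin d → ℝ)
    (g : (Fin d → ℝ) → Fin d → Fin m → ℝ) (η : ℝ) (z : Fin d → ℝ)
    (ξ : (Fin m → ℝ) × (Fin m → ℝ)) : Fin d → ℝ :=
  fun i => z i + com η (f z i) (g z i) (milsteinH g z i) ξ

lemma coarse_eq {d m : ℕ} (f : (Fin d → ℝ) → Fin d → ℝ)
    (g : (Fin d → ℝ) → Fin d → Fin m → ℝ) (η : ℝ) (z : Fin d → ℝ)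
    (ξ : (Fin m → ℝ) × (Fin m → ℝ)) :
    milsteinStep f g (η ^ 2) z (fun j => η * ξ.1 j + η * ξ.2 j) = coarse f g η z ξ := by
  funext i
  unfold milsteinStep coarse com
  rw [add_assoc, add_assoc]
  congr 1
  rw [add_assoc]
  congr 1
  · ring
  · congr 1
    · exact Finset.sum_congr rfl fun j _ => by ring
    · refine Finset.sum_congr rfl fun j _ => Finset.sum_congr rfl fun k _ => ?_
      split_ifs <;> ring

lemma com_lin3 {m : ℕ} (η a a' a'' : ℝ) (b b' b'' : Fin m → ℝ) (c c' c'' : Fin m → Fin m → ℝ)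
    (ξ : (Fin m → ℝ) × (Fin m → ℝ)) : com η (1 / 2 * a + 1 / 2 * a' - a'')
      (fun j => 1 / 2 * b j + 1 / 2 * b' j - b'' j)
      (fun j k => 1 / 2 * c j k + 1 / 2 * c' j k - c'' j k) ξ
      = 1 / 2 * com η a b c ξ + 1 / 2 * com η a' b' c' ξ - com η a'' b'' c'' ξ := by
  have h1 := com_lin η a a' (1 / 2) (1 / 2) b b' c c' ξ
  have h2 := com_lin η (1 / 2 * a + 1 / 2 * a') a'' 1 (-1) (fun j => 1 / 2 * b j + 1 / 2 * b' j) b''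
    (fun j k => 1 / 2 * c j k + 1 / 2 * c' j k) c'' ξ
  rw [h1] at h2
  rw [show 1 / 2 * com η a b c ξ + 1 / 2 * com η a' b' c' ξ - com η a'' b'' c'' ξ =
    1 * (1 / 2 * com η a b c ξ + 1 / 2 * com η a' b' c' ξ) + -1 * com η a'' b'' c'' ξ by ring, ← h2]
  congr 1
  · ring
  · funext j; ring
  · funext j k; ring

lemma mid_tay {E F : Type*} [NormedAddCommGroup E] [NormedSpace ℝ E] [NormedAddCommGroup F]
    [NormedSpace ℝ F] {φ : E → F} {C : ℝ} (hC : 0 ≤ C)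
    (tay : ∀ x y, ‖φ y - φ x - fderiv ℝ φ x (y - x)‖ ≤ C * ‖y - x‖ ^ 2) (x y : E) :
    ‖(1 / 2 : ℝ) • φ x + (1 / 2 : ℝ) • φ y - φ ((1 / 2 : ℝ) • (x + y))‖ ≤ C * ‖x - y‖ ^ 2 := by
  set p := (1 / 2 : ℝ) • (x + y) with hp
  have e1 : x - p = (1 / 2 : ℝ) • (x - y) := by rw [hp]; module
  have e2 : y - p = -((1 / 2 : ℝ) • (x - y)) := by rw [hp]; module
  have t1 := tay p x
  have t2 := tay p y
  rw [e1] at t1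
  rw [e2, map_neg, norm_neg] at t2
  set D := fderiv ℝ φ p ((1 / 2 : ℝ) • (x - y))
  have e3 : (1 / 2 : ℝ) • φ x + (1 / 2 : ℝ) • φ y - φ p
      = (1 / 2 : ℝ) • (φ x - φ p - D) + (1 / 2 : ℝ) • (φ y - φ p - -D) := by module
  rw [e3]
  refine (norm_add_le _ _).trans ?_
  rw [norm_smul, norm_smul]
  have e4 : ‖(1 / 2 : ℝ) • (x - y)‖ = 1 / 2 * ‖x - y‖ := by
    rw [norm_smul]; norm_num
  rw [e4] at t1 t2
  rw [Real.norm_of_nonneg (by norm_num : (0:ℝ) ≤ 1 / 2)]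
  nlinarith [mul_nonneg hC (sq_nonneg ‖x - y‖)]

section
variable {d m : ℕ} {f : (Fin d → ℝ) → Fin d → ℝ} {g : (Fin d → ℝ) → Fin d → Fin m → ℝ} {C : ℝ}

lemma fine_eq (η : ℝ) (x : Fin d → ℝ) (ξ : (Fin m → ℝ) × (Fin m → ℝ)) (i : Fin d) :
    fine f g η x ξ i = x i + com η (f x i) (g x i) (milsteinH g x i) ξ
      + ant η (milsteinH g x i) ξ + rem f g η x i ξ := by unfold rem; ring

lemma fine_swap_eq (η : ℝ) (x : Fin d → ℝ) (ξ : (Fin m → ℝ) × (Fin m → ℝ)) (i : Fin d) :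
    fine f g η x ξ.swap i = x i + com η (f x i) (g x i) (milsteinH g x i) ξ
      - ant η (milsteinH g x i) ξ + rem f g η x i ξ.swap := by
  rw [fine_eq, com_swap, ant_swap]; ring

lemma dec_grow (R : Reg f g C) : ∃ K, 0 ≤ K ∧ ∀ (η : ℝ) (x : Fin d → ℝ) (L : ℝ) (i : Fin d),
    0 ≤ η → η ≤ C → 1 + ‖x‖ ≤ L →
      Dec η (K * L) (fun ξ => fine f g η x ξ i - x i) ∧
      Dec η (K * L) (fun ξ => fine f g η x ξ.swap i - x i) ∧
      Dec η (K * L) (fun ξ => coarse f g η x ξ i - x i) := by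
  have h1 := R.one
  obtain ⟨C4, hC4, H⟩ := dec_rem R
  refine ⟨(1 + 2 * m + 6 * m ^ 2) * C ^ 2 + 2 * m ^ 2 * C ^ 2 + C4 * C, by positivity, ?_⟩
  intro η x L i hη hηC hL
  have hL0 : 0 ≤ L := by linarith [norm_nonneg x]
  have hCC : C ≤ C ^ 2 := by nlinarith
  have ha : |f x i| ≤ C ^ 2 * L := (norm_le_pi_norm (f x) i).trans ((R.fgrow x).trans (by gcongr))
  have hb : ∀ j, |g x i j| ≤ C ^ 2 * L := fun j =>
    (ent_le (g x) i j).trans ((R.ggrow x).trans (by gcongr))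
  have hc : ∀ j k, |η * milsteinH g x i j k| ≤ C ^ 2 * L := fun j k => by
    rw [abs_mul, abs_of_nonneg hη]
    have := R.hgrow x i j k
    calc _ ≤ C * (C * L) := by gcongr; exact this.trans (by gcongr)
      _ = _ := by ring
  have t1 := dec_com ha hb hc
  have t2 := dec_ant hc
  have t3 : Dec η (C4 * (C * L)) (rem f g η x i) := (H η x L i hη hηC hL).mono
    (by gcongr; exact (min_le_left _ _).trans (by gcongr))
  have F1 : Dec η (((1 + 2 * m + 6 * m ^ 2) * C ^ 2 + 2 * m ^ 2 * C ^ 2 + C4 * C) * L)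
      (fun ξ => fine f g η x ξ i - x i) :=
    (((t1.add t2).add t3).mono (le_of_eq (by ring))).congr fun ξ => by rw [fine_eq]; ring
  refine ⟨F1, F1.swap, (t1.mono ?_).congr fun ξ => by unfold coarse; ring⟩
  have : 0 ≤ (2 * m ^ 2 * C ^ 2 + C4 * C) * L := by positivity
  linarith

lemma dec_diff (R : Reg f g C) : ∃ K, 0 ≤ K ∧ ∀ (η : ℝ) (x y : Fin d → ℝ) (L : ℝ) (i : Fin d),
    0 ≤ η → η ≤ C → 1 + ‖x‖ ≤ L → 1 + ‖y‖ ≤ L →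
      Dec η (K * (‖x - y‖ + η * L)) (fun ξ => (fine f g η x ξ i - fine f g η y ξ.swap i) - (x i - y i)) ∧
      Dec η (K * (‖x - y‖ + η * L)) (fun ξ => (fine f g η x ξ i - coarse f g η y ξ i) - (x i - y i)) := by
  have h1 := R.one
  obtain ⟨C4, hC4, H⟩ := dec_rem R
  refine ⟨(1 + 2 * m + 6 * m ^ 2) * (2 * C) + 2 * m ^ 2 * (2 * C) + 2 * C4, by positivity, ?_⟩
  intro η x y L i hη hηC hL hL'
  have hL0 : 0 ≤ L := by linarith [norm_nonneg x]
  set a := ‖x - y‖ with ha'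
  have ha0 : 0 ≤ a := norm_nonneg _
  have hηL : 0 ≤ η * L := by positivity
  set B := 2 * C * (a + η * L) with hB
  have hCa : C * a ≤ B := by rw [hB]; nlinarith [mul_nonneg (by linarith : 0 ≤ C) hηL, mul_nonneg (by linarith : 0 ≤ C) ha0]
  have ha : |1 * f x i + (-1) * f y i| ≤ B := by
    have := (norm_le_pi_norm (f x - f y) i).trans (R.flip x y)
    rw [Real.norm_eq_abs, Pi.sub_apply] at this
    rw [show 1 * f x i + (-1) * f y i = f x i - f y i by ring]
    exact this.trans hCa
  have hb : ∀ j, |1 * g x i j + (-1) * g y i j| ≤ B := fun j => by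
    have := (ent_le (g x - g y) i j).trans (R.glip x y)
    rw [Pi.sub_apply, Pi.sub_apply] at this
    rw [show 1 * g x i j + (-1) * g y i j = g x i j - g y i j by ring]
    exact this.trans hCa
  have hh : ∀ x : Fin d → ℝ, 1 + ‖x‖ ≤ L → ∀ j k, η * |milsteinH g x i j k| ≤ C * (η * L) := by
    intro x hx j k
    have := R.hgrow x i j k
    calc _ ≤ η * (C * L) := by gcongr; exact this.trans (by gcongr)
      _ = _ := by ring
  have hCL : 2 * (C * (η * L)) ≤ B := by rw [hB]; nlinarith [mul_nonneg (by linarith : 0 ≤ C) ha0]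
  have habs : ∀ s t u v : ℝ, |s| ≤ 1 → |t| ≤ 1 → η * |u| ≤ C * (η * L) → η * |v| ≤ C * (η * L) →
      |η * (s * u + t * v)| ≤ B := by
    intro s t u v hs ht hu hv
    rw [abs_mul, abs_of_nonneg hη]
    have h1 := abs_add_le (s * u) (t * v)
    rw [abs_mul, abs_mul] at h1
    have h2 : |s| * |u| ≤ 1 * |u| := by gcongr
    have h3 : |t| * |v| ≤ 1 * |v| := by gcongr
    have h4 : η * |s * u + t * v| ≤ η * (|u| + |v|) := by gcongr; linarith
    linarith
  have hc : ∀ j k, |η * (1 * milsteinH g x i j k + (-1) * milsteinH g y i j k)| ≤ B := fun j k =>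
    habs _ _ _ _ (by norm_num) (by norm_num) (hh x hL j k) (hh y hL' j k)
  have hc2 : ∀ j k, |η * (1 * milsteinH g x i j k + 1 * milsteinH g y i j k)| ≤ B := fun j k =>
    habs _ _ _ _ (by norm_num) (by norm_num) (hh x hL j k) (hh y hL' j k)
  have hc3 : ∀ j k, |η * (1 * milsteinH g x i j k + 0 * milsteinH g y i j k)| ≤ B := fun j k =>
    habs _ _ _ _ (by norm_num) (by norm_num) (hh x hL j k) (hh y hL' j k)
  have t1 := dec_com ha hb hc
  have t2 := dec_ant hc2
  have t2' := dec_ant hc3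
  have t3 : ∀ x : Fin d → ℝ, 1 + ‖x‖ ≤ L → Dec η (C4 * (a + η * L)) (rem f g η x i) :=
    fun x hx => (H η x L i hη hηC hx).mono
      (by gcongr; exact (min_le_left _ _).trans (by linarith))
  constructor
  · refine (((t1.add t2).add ((t3 x hL).add ((t3 y hL').swap.smul (-1)))).mono
      (le_of_eq (by rw [hB]; simp; ring))).congr fun ξ => ?_
    rw [fine_eq, fine_swap_eq, com_lin, ant_lin]; ring
  · refine (((t1.add t2').add (t3 x hL)).mono ?_).congr fun ξ => ?_
    · have : 0 ≤ C4 * (a + η * L) := by positivity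
      rw [hB]; nlinarith
    · rw [fine_eq, com_lin, ant_lin]; unfold coarse; ring

lemma dec_mid (R : Reg f g C) : ∃ K, 0 ≤ K ∧ ∀ (η : ℝ) (x y z : Fin d → ℝ) (L : ℝ) (i : Fin d),
    0 ≤ η → η ≤ C → 1 + ‖x‖ + ‖y‖ + ‖z‖ ≤ L →
      Dec η (K * (‖(1 / 2 : ℝ) • (x + y) - z‖ + ‖x - y‖ ^ 2 + ‖x - z‖ ^ 2 + (η * L) ^ 2))
        (fun ξ => (1 / 2 * (fine f g η x ξ i + fine f g η y ξ.swap i) - coarse f g η z ξ i)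
          - (1 / 2 * (x i + y i) - z i)) := by
  have h1 := R.one
  have hC0 : 0 ≤ C := by linarith
  obtain ⟨C4, hC4, H⟩ := dec_rem R
  refine ⟨(1 + 2 * m + 6 * m ^ 2) * (2 * C) + 2 * m ^ 2 * (2 * C) + C4, by positivity, ?_⟩
  intro η x y z L i hη hηC hL
  have nx := norm_nonneg x
  have ny := norm_nonneg y
  have nz := norm_nonneg z
  have hL0 : 0 ≤ L := by linarith
  set p := (1 / 2 : ℝ) • (x + y) with hp
  set a := ‖x - y‖ with ha'
  set b := ‖x - z‖ with hb'
  set c := ‖p - z‖ with hc'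
  have ha0 : 0 ≤ a := norm_nonneg _
  have hb0 : 0 ≤ b := norm_nonneg _
  have hc0 : 0 ≤ c := norm_nonneg _
  set θ := η * L with hθ
  have hθ0 : 0 ≤ θ := by positivity
  have hyz : ‖y - z‖ ≤ a + b := by
    have := norm_sub_le (x - z) (x - y)
    rw [show x - z - (x - y) = y - z by abel] at this
    linarith
  set S := c + a ^ 2 + b ^ 2 + θ ^ 2 with hS
  have hS1 : c + a ^ 2 ≤ S := by rw [hS]; nlinarith [sq_nonneg b, sq_nonneg θ]
  have hS0 : 0 ≤ S := by positivity
  have hS2 : θ * (a + b) ≤ S := by rw [hS]; nlinarith [sq_nonneg (θ - a), sq_nonneg (θ - b)]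
  have hCS : C * (c + a ^ 2) ≤ 2 * C * S := by nlinarith
  have key : ∀ {G : Type} [NormedAddCommGroup G] [NormedSpace ℝ G] (F : (Fin d → ℝ) → G)
      (_ : ∀ x y, ‖F x - F y‖ ≤ C * ‖x - y‖)
      (_ : ∀ x y, ‖F y - F x - fderiv ℝ F x (y - x)‖ ≤ C * ‖y - x‖ ^ 2),
      ‖(1 / 2 : ℝ) • F x + (1 / 2 : ℝ) • F y - F z‖ ≤ 2 * C * S := by
    intro G _ _ F lip tay
    have t1 := mid_tay hC0 tay x y
    have t2 := lip p z
    have t3 := norm_add_le ((1 / 2 : ℝ) • F x + (1 / 2 : ℝ) • F y - F p) (F p - F z)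
    rw [sub_add_sub_cancel] at t3
    linarith
  have ha : |1 / 2 * f x i + 1 / 2 * f y i - f z i| ≤ 2 * C * S :=
    (norm_le_pi_norm _ i).trans (key f R.flip R.ftay)
  have hb : ∀ j, |1 / 2 * g x i j + 1 / 2 * g y i j - g z i j| ≤ 2 * C * S := fun j =>
    (ent_le _ i j).trans (key g R.glip R.gtay)
  have hxz : ∀ j k, η * |milsteinH g x i j k - milsteinH g z i j k| ≤ C * (θ * b) := fun j k => by
    calc _ ≤ η * (C * L * b) := by
          gcongr; exact (R.hlip x z i j k).trans (by gcongr; linarith)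
      _ = _ := by rw [hθ]; ring
  have hyz' : ∀ j k, η * |milsteinH g y i j k - milsteinH g z i j k| ≤ C * (θ * (a + b)) :=
    fun j k => by
    calc _ ≤ η * (C * L * (a + b)) := by
          gcongr; exact (R.hlip y z i j k).trans (by gcongr; linarith)
      _ = _ := by rw [hθ]; ring
  have hxy : ∀ j k, η * |milsteinH g x i j k - milsteinH g y i j k| ≤ C * (θ * a) := fun j k => by
    calc _ ≤ η * (C * L * a) := by
          gcongr; exact (R.hlip x y i j k).trans (by gcongr; linarith)
      _ = _ := by rw [hθ]; ring
  have hCS2 : C * (θ * (a + b)) ≤ C * S := by gcongr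
  have hθa : 0 ≤ C * (θ * a) := by positivity
  have hθb : 0 ≤ C * (θ * b) := by positivity
  have hc : ∀ j k, |η * (1 / 2 * milsteinH g x i j k + 1 / 2 * milsteinH g y i j k
      - milsteinH g z i j k)| ≤ 2 * C * S := fun j k => by
    have e : η * (1 / 2 * milsteinH g x i j k + 1 / 2 * milsteinH g y i j k
      - milsteinH g z i j k) = 1 / 2 * (η * (milsteinH g x i j k - milsteinH g z i j k))
        + 1 / 2 * (η * (milsteinH g y i j k - milsteinH g z i j k)) := by ring
    rw [e]
    refine (abs_add_le _ _).trans ?_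
    rw [abs_mul, abs_mul, abs_mul, abs_mul, abs_of_nonneg hη,
      abs_of_nonneg (by norm_num : (0:ℝ) ≤ 1 / 2)]
    have := hxz j k
    have := hyz' j k
    nlinarith
  have hc2 : ∀ j k, |η * (1 / 2 * milsteinH g x i j k + (-1 / 2) * milsteinH g y i j k)|
      ≤ 2 * C * S := fun j k => by
    rw [show η * (1 / 2 * milsteinH g x i j k + (-1 / 2) * milsteinH g y i j k)
      = 1 / 2 * (η * (milsteinH g x i j k - milsteinH g y i j k)) by ring, abs_mul, abs_mul,
      abs_of_nonneg hη, abs_of_nonneg (by norm_num : (0:ℝ) ≤ 1 / 2)]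
    have := hxy j k
    nlinarith
  have t1 := dec_com ha hb hc
  have t2 := dec_ant hc2
  have t3 : ∀ x : Fin d → ℝ, 1 + ‖x‖ ≤ L → Dec η (C4 * S) (rem f g η x i) :=
    fun x hx => (H η x L i hη hηC hx).mono
      (by gcongr; refine (min_le_right _ _).trans ?_; rw [hS]; nlinarith [sq_nonneg b, sq_nonneg a])
  refine (((t1.add t2).add (((t3 x (by linarith)).smul (1 / 2)).add
    ((t3 y (by linarith)).swap.smul (1 / 2)))).mono
      (le_of_eq (by rw [abs_of_nonneg (by norm_num : (0:ℝ) ≤ 1 / 2)]; ring))).congr fun ξ => ?_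
  rw [fine_eq, fine_swap_eq, com_lin3, ant_lin]; unfold coarse; ring

end

end AM

namespace AM

/-- the Lyapunov function -/
noncomputable def lyap {d : ℕ} (η : ℝ) (x y z : Fin d → ℝ) : ℝ :=
  (η ^ 4 * (1 + (∑ i, x i ^ 4 + (∑ i, y i ^ 4 + ∑ i, z i ^ 4)))
    + (∑ i, (x i - y i) ^ 4 + ∑ i, (x i - z i) ^ 4))
    + ∑ i, (1 / 2 * (x i + y i) - z i) ^ 2

lemma norm4_le {d : ℕ} (x : Fin d → ℝ) : ‖x‖ ^ 4 ≤ ∑ i, x i ^ 4 := by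
  have h0 : 0 ≤ ∑ i, x i ^ 4 := Finset.sum_nonneg fun i _ => by positivity
  rcases isEmpty_or_nonempty (Fin d) with h | h
  · have : x = 0 := Subsingleton.elim _ _
    rw [this]; simp
  · obtain ⟨i, hi⟩ := Finite.exists_max (fun i => ‖x i‖)
    have : ‖x‖ ≤ ‖x i‖ := (pi_norm_le_iff_of_nonneg (norm_nonneg _)).2 hi
    calc ‖x‖ ^ 4 ≤ ‖x i‖ ^ 4 := by gcongr
      _ = x i ^ 4 := by rw [Real.norm_eq_abs, ← abs_pow]; exact abs_of_nonneg (by positivity)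
      _ ≤ _ := Finset.single_le_sum (f := fun i => x i ^ 4) (fun i _ => by positivity)
        (Finset.mem_univ i)

lemma norm2_le {d : ℕ} (x : Fin d → ℝ) : ‖x‖ ^ 2 ≤ ∑ i, x i ^ 2 := by
  have h0 : 0 ≤ ∑ i, x i ^ 2 := Finset.sum_nonneg fun i _ => by positivity
  rcases isEmpty_or_nonempty (Fin d) with h | h
  · have : x = 0 := Subsingleton.elim _ _
    rw [this]; simp
  · obtain ⟨i, hi⟩ := Finite.exists_max (fun i => ‖x i‖)
    have : ‖x‖ ≤ ‖x i‖ := (pi_norm_le_iff_of_nonneg (norm_nonneg _)).2 hi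
    calc ‖x‖ ^ 2 ≤ ‖x i‖ ^ 2 := by gcongr
      _ = x i ^ 2 := by rw [Real.norm_eq_abs, sq_abs]
      _ ≤ _ := Finset.single_le_sum (f := fun i => x i ^ 2) (fun i _ => by positivity)
        (Finset.mem_univ i)

lemma four_sq (a b c e : ℝ) : (a + b + c + e) ^ 2 ≤ 4 * (a ^ 2 + b ^ 2 + c ^ 2 + e ^ 2) := by
  nlinarith [sq_nonneg (a - b), sq_nonneg (a - c), sq_nonneg (a - e), sq_nonneg (b - c),
    sq_nonneg (b - e), sq_nonneg (c - e)]

lemma four_four (a b c e : ℝ) : (a + b + c + e) ^ 4 ≤ 64 * (a ^ 4 + b ^ 4 + c ^ 4 + e ^ 4) := by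
  have h1 := four_sq a b c e
  have h2 := four_sq (a ^ 2) (b ^ 2) (c ^ 2) (e ^ 2)
  have h3 : ((a + b + c + e) ^ 2) ^ 2 ≤ (4 * (a ^ 2 + b ^ 2 + c ^ 2 + e ^ 2)) ^ 2 := by gcongr
  nlinarith

lemma two_four (a b : ℝ) : (a + b) ^ 4 ≤ 64 * (a ^ 4 + b ^ 4) := by
  simpa using four_four a b 0 0

lemma lyap_bds {d : ℕ} (η : ℝ) (x y z : Fin d → ℝ) :
    (0 ≤ lyap η x y z) ∧ (η * (1 + ‖x‖ + ‖y‖ + ‖z‖)) ^ 4 ≤ 64 * lyap η x y z ∧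
    ‖x - y‖ ^ 4 ≤ lyap η x y z ∧ ‖x - z‖ ^ 4 ≤ lyap η x y z ∧
    ‖(1 / 2 : ℝ) • (x + y) - z‖ ^ 2 ≤ lyap η x y z := by
  have h1 := norm4_le x
  have h2 := norm4_le y
  have h3 := norm4_le z
  have h4 : ‖x - y‖ ^ 4 ≤ ∑ i, (x i - y i) ^ 4 := norm4_le (x - y)
  have h5 : ‖x - z‖ ^ 4 ≤ ∑ i, (x i - z i) ^ 4 := norm4_le (x - z)
  have h6 : ‖(1 / 2 : ℝ) • (x + y) - z‖ ^ 2 ≤ ∑ i, (1 / 2 * (x i + y i) - z i) ^ 2 := norm2_le _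
  have h7 := four_four 1 ‖x‖ ‖y‖ ‖z‖
  have p1 : 0 ≤ ‖x - y‖ ^ 4 := by positivity
  have p2 : 0 ≤ ‖x - z‖ ^ 4 := by positivity
  have p3 : 0 ≤ ‖(1 / 2 : ℝ) • (x + y) - z‖ ^ 2 := by positivity
  have p4 : 0 ≤ η ^ 4 := by positivity
  have h8 : (1 + ‖x‖ + ‖y‖ + ‖z‖) ^ 4
      ≤ 64 * (1 + (∑ i, x i ^ 4 + (∑ i, y i ^ 4 + ∑ i, z i ^ 4))) := by linarith
  have p5 : 0 ≤ 1 + (∑ i, x i ^ 4 + (∑ i, y i ^ 4 + ∑ i, z i ^ 4)) := by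
    have : 0 ≤ ‖x‖ ^ 4 := by positivity
    have : 0 ≤ ‖y‖ ^ 4 := by positivity
    have : 0 ≤ ‖z‖ ^ 4 := by positivity
    linarith
  have h9 := mul_le_mul_of_nonneg_left h8 p4
  have p6 := mul_nonneg p4 p5
  unfold lyap
  refine ⟨by linarith, ?_, by linarith, by linarith, by linarith⟩
  rw [mul_pow]
  linarith

lemma EB_sum_pow {m d n : ℕ} {K c X : ℝ} {D A : Fin d → ℝ}
    {u : Fin d → (Fin m → ℝ) × (Fin m → ℝ) → ℝ} (hKc : 0 ≤ K * c)
    (hA : ∀ i, A i ^ n ≤ X)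
    (h : ∀ i, EB (fun ξ => u i ξ ^ n) (D i ^ n + K * c * (D i ^ n + A i ^ n))) :
    EB (fun ξ => ∑ i, u i ξ ^ n) (∑ i, D i ^ n + K * c * (∑ i, D i ^ n + d * X)) := by
  refine (EB.sum h).congr (fun ξ => rfl) ?_
  rw [Finset.sum_add_distrib, ← Finset.mul_sum, Finset.sum_add_distrib]
  gcongr
  refine (Finset.sum_le_sum fun i _ => hA i).trans ?_
  simp

section
variable {d m : ℕ} {f : (Fin d → ℝ) → Fin d → ℝ} {g : (Fin d → ℝ) → Fin d → Fin m → ℝ} {C : ℝ}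

lemma one_step (R : Reg f g C) : ∃ K, 0 ≤ K ∧ ∀ (η : ℝ) (x y z : Fin d → ℝ), 0 ≤ η → η ≤ C →
    EB (fun ξ => lyap η (fine f g η x ξ) (fine f g η y ξ.swap) (coarse f g η z ξ))
      ((1 + K * η ^ 2) * lyap η x y z) := by
  have h1 := R.one
  obtain ⟨Ka, hKa, Ha⟩ := dec_grow R
  obtain ⟨Kb, hKb, Hb⟩ := dec_diff R
  obtain ⟨Kc, hKc, Hc⟩ := dec_mid R
  obtain ⟨K4, hK4, H4⟩ := moment4 m C
  obtain ⟨K2, hK2, H2⟩ := moment2 m C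
  refine ⟨(K4 + K2) * (1 + 3 * d * (Ka ^ 4 * 64) + 2 * d * (Kb ^ 4 * 5000)
    + d * (Kc ^ 2 * 1000)), by positivity, ?_⟩
  intro η x y z hη hηC
  obtain ⟨v0, v1, v2, v3, v4⟩ := lyap_bds η x y z
  set V := lyap η x y z with hV
  set L := 1 + ‖x‖ + ‖y‖ + ‖z‖ with hL
  have nx := norm_nonneg x
  have ny := norm_nonneg y
  have nz := norm_nonneg z
  have hx : 1 + ‖x‖ ≤ L := by linarith
  have hy : 1 + ‖y‖ ≤ L := by linarith
  have hz : 1 + ‖z‖ ≤ L := by linarith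
  have k4 : 0 ≤ K4 * η ^ 2 := by positivity
  have k2 : 0 ≤ K2 * η ^ 2 := by positivity
  have E1 := EB_sum_pow (m := m) (n := 4) (D := x) (A := fun _ => Ka * L)
    (u := fun i ξ => fine f g η x ξ i) k4 (fun i => le_refl _) fun i =>
      (H4 η (Ka * L) (x i) _ hη hηC (Ha η x L i hη hηC hx).1).congr (fun ξ => by ring) le_rfl
  have E2 := EB_sum_pow (m := m) (n := 4) (D := y) (A := fun _ => Ka * L)
    (u := fun i ξ => fine f g η y ξ.swap i) k4 (fun i => le_refl _) fun i =>
      (H4 η (Ka * L) (y i) _ hη hηC (Ha η y L i hη hηC hy).2.1).congr (fun ξ => by ring) le_rfl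
  have E3 := EB_sum_pow (m := m) (n := 4) (D := z) (A := fun _ => Ka * L)
    (u := fun i ξ => coarse f g η z ξ i) k4 (fun i => le_refl _) fun i =>
      (H4 η (Ka * L) (z i) _ hη hηC (Ha η z L i hη hηC hz).2.2).congr (fun ξ => by ring) le_rfl
  have A4 : (Kb * (‖x - y‖ + η * L)) ^ 4 ≤ Kb ^ 4 * 5000 * V := by
    rw [mul_pow, mul_assoc]
    gcongr
    have := two_four ‖x - y‖ (η * L)
    linarith
  have A5 : (Kb * (‖x - z‖ + η * L)) ^ 4 ≤ Kb ^ 4 * 5000 * V := by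
    rw [mul_pow, mul_assoc]
    gcongr
    have := two_four ‖x - z‖ (η * L)
    linarith
  have A6 : (Kc * (‖(1 / 2 : ℝ) • (x + y) - z‖ + ‖x - y‖ ^ 2 + ‖x - z‖ ^ 2 + (η * L) ^ 2)) ^ 2
      ≤ Kc ^ 2 * 1000 * V := by
    rw [mul_pow, mul_assoc]
    gcongr
    have := four_sq ‖(1 / 2 : ℝ) • (x + y) - z‖ (‖x - y‖ ^ 2) (‖x - z‖ ^ 2) ((η * L) ^ 2)
    simp only [← pow_mul] at this
    norm_num at this v1 v2 v3 v4 ⊢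
    linarith
  have E4 := EB_sum_pow (m := m) (n := 4) (D := fun i => x i - y i)
    (A := fun _ => Kb * (‖x - y‖ + η * L))
    (u := fun i ξ => fine f g η x ξ i - fine f g η y ξ.swap i) k4 (fun i => A4) fun i =>
      (H4 η _ (x i - y i) _ hη hηC (Hb η x y L i hη hηC hx hy).1).congr (fun ξ => by ring) le_rfl
  have E5 := EB_sum_pow (m := m) (n := 4) (D := fun i => x i - z i)
    (A := fun _ => Kb * (‖x - z‖ + η * L))
    (u := fun i ξ => fine f g η x ξ i - coarse f g η z ξ i) k4 (fun i => A5) fun i =>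
      (H4 η _ (x i - z i) _ hη hηC (Hb η x z L i hη hηC hx hz).2).congr (fun ξ => by ring) le_rfl
  have E6 := EB_sum_pow (m := m) (n := 2) (D := fun i => 1 / 2 * (x i + y i) - z i)
    (A := fun _ => Kc * (‖(1 / 2 : ℝ) • (x + y) - z‖ + ‖x - y‖ ^ 2 + ‖x - z‖ ^ 2 + (η * L) ^ 2))
    (u := fun i ξ => 1 / 2 * (fine f g η x ξ i + fine f g η y ξ.swap i) - coarse f g η z ξ i)
    k2 (fun i => A6) fun i =>
      (H2 η _ (1 / 2 * (x i + y i) - z i) _ hη hηC (Hc η x y z L i hη hηC le_rfl)).congr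
        (fun ξ => by ring) le_rfl
  have η4 : 0 ≤ η ^ 4 := by positivity
  have E := ((((EB.const 1).add (E1.add (E2.add E3))).smul η4).add (E4.add E5)).add E6
  refine E.congr (fun ξ => rfl) ?_
  have s1 : 0 ≤ ∑ i, x i ^ 4 := Finset.sum_nonneg fun i _ => by positivity
  have s2 : 0 ≤ ∑ i, y i ^ 4 := Finset.sum_nonneg fun i _ => by positivity
  have s3 : 0 ≤ ∑ i, z i ^ 4 := Finset.sum_nonneg fun i _ => by positivity
  have s4 : 0 ≤ ∑ i, (x i - y i) ^ 4 := Finset.sum_nonneg fun i _ => by positivity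
  have s5 : 0 ≤ ∑ i, (x i - z i) ^ 4 := Finset.sum_nonneg fun i _ => by positivity
  have s6 : 0 ≤ ∑ i, (1 / 2 * (x i + y i) - z i) ^ 2 := Finset.sum_nonneg fun i _ => by positivity
  have hVe : V = _ := hV
  unfold lyap at hVe
  have B : η ^ 4 * (Ka * L) ^ 4 ≤ Ka ^ 4 * 64 * V := by
    calc _ = Ka ^ 4 * (η * L) ^ 4 := by ring
      _ ≤ Ka ^ 4 * (64 * V) := by gcongr
      _ = _ := by ring
  set S1 := ∑ i, x i ^ 4
  set S2 := ∑ i, y i ^ 4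
  set S3 := ∑ i, z i ^ 4
  set S4 := ∑ i, (x i - y i) ^ 4
  set S5 := ∑ i, (x i - z i) ^ 4
  set S6 := ∑ i, (1 / 2 * (x i + y i) - z i) ^ 2
  set κ := K4 + K2 with hκ
  have hd0 : (0 : ℝ) ≤ d := Nat.cast_nonneg d
  have T1 : η ^ 4 * (S1 + S2 + S3 + 3 * d * (Ka * L) ^ 4) + (S4 + S5 + 2 * d * (Kb ^ 4 * 5000 * V))
      ≤ V - S6 + 3 * d * (Ka ^ 4 * 64 * V) + 2 * d * (Kb ^ 4 * 5000 * V) := by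
    have : 3 * d * (η ^ 4 * (Ka * L) ^ 4) ≤ 3 * d * (Ka ^ 4 * 64 * V) := by gcongr
    linarith
  have T2 := mul_le_mul_of_nonneg_left T1 k4
  have T3 : K4 * η ^ 2 * (V - S6 + 3 * d * (Ka ^ 4 * 64 * V) + 2 * d * (Kb ^ 4 * 5000 * V))
      ≤ κ * η ^ 2 * (V - S6 + 3 * d * (Ka ^ 4 * 64 * V) + 2 * d * (Kb ^ 4 * 5000 * V)) := by
    have : 0 ≤ V - S6 := by
      have := mul_nonneg η4 (by linarith : 0 ≤ 1 + (S1 + (S2 + S3)))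
      linarith
    gcongr
    linarith
  have T4 : K2 * η ^ 2 * (S6 + d * (Kc ^ 2 * 1000 * V))
      ≤ κ * η ^ 2 * (S6 + d * (Kc ^ 2 * 1000 * V)) := by
    gcongr
    linarith
  have := T2.trans T3
  calc _ = V + (K4 * η ^ 2 * (η ^ 4 * (S1 + S2 + S3 + 3 * d * (Ka * L) ^ 4)
          + (S4 + S5 + 2 * d * (Kb ^ 4 * 5000 * V)))
        + K2 * η ^ 2 * (S6 + d * (Kc ^ 2 * 1000 * V))) := by rw [hVe]; ring
    _ ≤ V + (κ * η ^ 2 * (V - S6 + 3 * d * (Ka ^ 4 * 64 * V) + 2 * d * (Kb ^ 4 * 5000 * V))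
        + κ * η ^ 2 * (S6 + d * (Kc ^ 2 * 1000 * V))) := by gcongr
    _ = _ := by ring

end

end AM

namespace AM

lemma payoff_bd {d : ℕ} {P : (Fin d → ℝ) → ℝ} (hP : ContDiff ℝ 2 P) {C : ℝ} (hC : 0 ≤ C)
    (hP1 : ∀ x, ‖fderiv ℝ P x‖ ≤ C) (hP2 : ∀ x, ‖iteratedFDeriv ℝ 2 P x‖ ≤ C) (η : ℝ)
    (x y z : Fin d → ℝ) :
    (1 / 2 * (P x + P y) - P z) ^ 2 ≤ 4 * C ^ 2 * lyap η x y z := by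
  obtain ⟨v0, v1, v2, v3, v4⟩ := lyap_bds η x y z
  have t1 := mid_tay hC (tay_of_bd hP hC hP2) x y
  have t2 := lip_of_bd hP hP1 ((1 / 2 : ℝ) • (x + y)) z
  rw [Real.norm_eq_abs, smul_eq_mul, smul_eq_mul] at t1
  rw [Real.norm_eq_abs] at t2
  set p := (1 / 2 : ℝ) • (x + y)
  have t3 := abs_add_le (1 / 2 * P x + 1 / 2 * P y - P p) (P p - P z)
  rw [sub_add_sub_cancel] at t3
  rw [show 1 / 2 * (P x + P y) - P z = 1 / 2 * P x + 1 / 2 * P y - P z by ring, ← sq_abs]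
  have t4 : |1 / 2 * P x + 1 / 2 * P y - P z| ≤ C * ‖x - y‖ ^ 2 + C * ‖p - z‖ := by linarith
  calc _ ≤ (C * ‖x - y‖ ^ 2 + C * ‖p - z‖) ^ 2 := by gcongr
    _ ≤ C ^ 2 * (2 * (‖x - y‖ ^ 4 + ‖p - z‖ ^ 2)) := by
      rw [← mul_add, mul_pow]
      gcongr
      nlinarith [sq_nonneg (‖x - y‖ ^ 2 - ‖p - z‖)]
    _ ≤ C ^ 2 * (2 * (lyap η x y z + lyap η x y z)) := by gcongr
    _ = _ := by ring

section
variable {d m : ℕ} {f : (Fin d → ℝ) → Fin d → ℝ} {g : (Fin d → ℝ) → Fin d → Fin m → ℝ} {C : ℝ}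

lemma mid_cont2 (R : Reg f g C) (η : ℝ) :
    Continuous (fun p : (Fin d → ℝ) × (Fin m → ℝ) => mid f g η p.1 p.2) := by
  rw [continuous_pi_iff]
  intro i
  simp only [mid_apply]
  have h1 := R.fcont
  have h2 := R.gcont
  have h3 : ∀ j k, Continuous fun p : (Fin d → ℝ) × (Fin m → ℝ) => milsteinH g p.1 i j k :=
    fun j k => (R.hcont i j k).comp continuous_fst
  fun_prop

/-- state space -/
abbrev St (d : ℕ) := (Fin d → ℝ) × (Fin d → ℝ) × (Fin d → ℝ)

/-- the joint step map -/
noncomputable def stp (f : (Fin d → ℝ) → Fin d → ℝ) (g : (Fin d → ℝ) → Fin d → Fin m → ℝ) (η : ℝ)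
    (p : St d × ((Fin m → ℝ) × (Fin m → ℝ))) : St d :=
  (fine f g η p.1.1 p.2, fine f g η p.1.2.1 p.2.swap, coarse f g η p.1.2.2 p.2)

lemma fine_cont (R : Reg f g C) (η : ℝ) :
    Continuous (fun p : (Fin d → ℝ) × ((Fin m → ℝ) × (Fin m → ℝ)) => fine f g η p.1 p.2) := by
  unfold fine
  have h := mid_cont2 R η
  have h1 : Continuous (fun p : (Fin d → ℝ) × ((Fin m → ℝ) × (Fin m → ℝ)) =>
      mid f g η p.1 p.2.1) := h.comp (by fun_prop : Continuous fun p :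
        (Fin d → ℝ) × ((Fin m → ℝ) × (Fin m → ℝ)) => (p.1, p.2.1))
  exact h.comp (h1.prodMk (by fun_prop))

lemma coarse_cont (R : Reg f g C) (η : ℝ) :
    Continuous (fun p : (Fin d → ℝ) × ((Fin m → ℝ) × (Fin m → ℝ)) => coarse f g η p.1 p.2) := by
  rw [continuous_pi_iff]
  intro i
  unfold coarse com
  have h1 := R.fcont
  have h2 := R.gcont
  have h3 : ∀ j k, Continuous fun p : (Fin d → ℝ) × ((Fin m → ℝ) × (Fin m → ℝ)) =>
    milsteinH g p.1 i j k := fun j k => (R.hcont i j k).comp continuous_fst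
  fun_prop

lemma stp_cont (R : Reg f g C) (η : ℝ) : Continuous (stp f g η) := by
  unfold stp
  refine Continuous.prodMk ?_ (Continuous.prodMk ?_ ?_)
  · exact (fine_cont R η).comp (by fun_prop : Continuous fun p :
      St d × ((Fin m → ℝ) × (Fin m → ℝ)) => (p.1.1, p.2))
  · exact (fine_cont R η).comp (by fun_prop : Continuous fun p :
      St d × ((Fin m → ℝ) × (Fin m → ℝ)) => (p.1.2.1, p.2.swap))
  · exact (coarse_cont R η).comp (by fun_prop : Continuous fun p :
      St d × ((Fin m → ℝ) × (Fin m → ℝ)) => (p.1.2.2, p.2))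

lemma lyap_cont (η : ℝ) : Continuous (fun s : St d => lyap η s.1 s.2.1 s.2.2) := by
  unfold lyap; fun_prop

lemma step_lintegral (R : Reg f g C) {K : ℝ} (hK : 0 ≤ K)
    (H : ∀ (η : ℝ) (x y z : Fin d → ℝ), 0 ≤ η → η ≤ C →
      EB (fun ξ => lyap η (fine f g η x ξ) (fine f g η y ξ.swap) (coarse f g η z ξ))
      ((1 + K * η ^ 2) * lyap η x y z)) {η : ℝ} (hη : 0 ≤ η) (hηC : η ≤ C)
    {Ω : Type} [MeasurableSpace Ω] {μ : Measure Ω} [IsProbabilityMeasure μ]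
    {S : Ω → St d} {ξ : Ω → (Fin m → ℝ) × (Fin m → ℝ)} (hS : Measurable S) (hξ : Measurable ξ)
    (hind : IndepFun S ξ μ) (hlaw : μ.map ξ = gam2 m) :
    ∫⁻ ω, ENNReal.ofReal ((fun s : St d => lyap η s.1 s.2.1 s.2.2) (stp f g η (S ω, ξ ω))) ∂μ
      ≤ ENNReal.ofReal (1 + K * η ^ 2) *
        ∫⁻ ω, ENNReal.ofReal ((fun s : St d => lyap η s.1 s.2.1 s.2.2) (S ω)) ∂μ := by
  set V := (fun s : St d => lyap η s.1 s.2.1 s.2.2) with hV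
  have hVm : Measurable V := (lyap_cont η).measurable
  have hVs : Measurable fun p => ENNReal.ofReal (V (stp f g η p)) :=
    (hVm.comp (stp_cont R η).measurable).ennreal_ofReal
  have hK1 : 0 ≤ 1 + K * η ^ 2 := by positivity
  rw [← lintegral_map (f := fun p => ENNReal.ofReal (V (stp f g η p))) hVs (hS.prodMk hξ),
    (indepFun_iff_map_prod_eq_prod_map_map hS.aemeasurable hξ.aemeasurable).1 hind, hlaw,
    lintegral_prod _ hVs.aemeasurable, ← lintegral_map (f := fun s => ENNReal.ofReal (V s))
      hVm.ennreal_ofReal hS, ← lintegral_const_mul _ hVm.ennreal_ofReal]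
  refine lintegral_mono fun s => ?_
  have h := H η s.1 s.2.1 s.2.2 hη hηC
  rw [← ENNReal.ofReal_mul hK1]
  refine le_trans ?_ (ENNReal.ofReal_le_ofReal h.2)
  rw [ofReal_integral_eq_lintegral_ofReal h.1 (Filter.Eventually.of_forall fun ξ =>
    (lyap_bds η _ _ _).1)]
  exact le_of_eq rfl

end

lemma indep_gen {Ω ι α β : Type} [MeasurableSpace Ω] {μ : Measure Ω} [MeasurableSpace α]
    [MeasurableSpace β] {U : ι → Ω → ℝ} (hU : ∀ i, Measurable (U i)) (hind : iIndepFun U μ)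
    {A B : Set ι} (hAB : Disjoint A B) {X : Ω → α} {Y : Ω → β}
    (hX : Measurable[⨆ i ∈ A, MeasurableSpace.comap (U i) inferInstance] X)
    (hY : Measurable[⨆ i ∈ B, MeasurableSpace.comap (U i) inferInstance] Y) : IndepFun X Y μ := by
  rw [IndepFun_iff_Indep]
  have h := indep_iSup_of_disjoint (m := fun i => MeasurableSpace.comap (U i) inferInstance)
    (fun i => (hU i).comap_le) hind hAB
  exact indep_of_indep_of_le_left (indep_of_indep_of_le_right h hY.comap_le) hX.comap_le

lemma meas_gen {Ω ι : Type} {U : ι → Ω → ℝ} {A : Set ι} {i : ι} (hi : i ∈ A) :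
    Measurable[⨆ i ∈ A, MeasurableSpace.comap (U i) inferInstance] (U i) := by
  have h : MeasurableSpace.comap (U i) inferInstance
    ≤ ⨆ i ∈ A, MeasurableSpace.comap (U i) inferInstance :=
    le_iSup₂ (f := fun i (_ : i ∈ A) => MeasurableSpace.comap (U i) inferInstance) i hi
  exact (comap_measurable (U i)).mono h le_rfl

lemma gen_le {Ω ι : Type} [MeasurableSpace Ω] {U : ι → Ω → ℝ} (hU : ∀ i, Measurable (U i))
    (A : Set ι) : (⨆ i ∈ A, MeasurableSpace.comap (U i) inferInstance) ≤ ‹MeasurableSpace Ω› :=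
  iSup₂_le fun i _ => (hU i).comap_le

/-- normalised noise -/
noncomputable def noise {N m : ℕ} {Ω : Type} (W : Fin N → Bool → Ω → Fin m → ℝ) (η : ℝ) (n : Fin N)
    (ω : Ω) : (Fin m → ℝ) × (Fin m → ℝ) :=
  (fun j => W n false ω j / η, fun j => W n true ω j / η)

lemma half_meas {N m : ℕ} {Ω : Type} {_ : MeasurableSpace Ω} {W : Fin N → Bool → Ω → Fin m → ℝ} {η : ℝ}
    {n : Fin N} {b : Bool} (h : ∀ j, Measurable (fun ω => W n b ω j)) :
    Measurable (fun ω j => W n b ω j / η) :=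
  measurable_pi_lambda _ fun j => (h j).div_const η

lemma noise_meas0 {N m : ℕ} {Ω : Type} {_ : MeasurableSpace Ω} {W : Fin N → Bool → Ω → Fin m → ℝ} {η : ℝ}
    {n : Fin N} (h : ∀ b j, Measurable (fun ω => W n b ω j)) :
    Measurable (noise W η n) :=
  (half_meas (h false)).prodMk (half_meas (h true))

lemma noise_meas {N m : ℕ} {Ω : Type} (W : Fin N → Bool → Ω → Fin m → ℝ) (η : ℝ) (n : Fin N)
    {A : Set (Fin N × Bool × Fin m)} (hA : ∀ b j, (n, b, j) ∈ A) :
    Measurable[⨆ q ∈ A, MeasurableSpace.comap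
      ((fun q : Fin N × Bool × Fin m => fun ω => W q.1 q.2.1 ω q.2.2) q) inferInstance]
      (noise W η n) := by
  have h : ∀ b j, Measurable[⨆ q ∈ A, MeasurableSpace.comap
      ((fun q : Fin N × Bool × Fin m => fun ω => W q.1 q.2.1 ω q.2.2) q) inferInstance]
      (fun ω => W n b ω j) := fun b j =>
    meas_gen (U := fun q : Fin N × Bool × Fin m => fun ω => W q.1 q.2.1 ω q.2.2) (hA b j)
  exact noise_meas0 h

lemma noise_law {N m : ℕ} {Ω : Type} [MeasurableSpace Ω] {μ : Measure Ω} [IsProbabilityMeasure μ]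
    {W : Fin N → Bool → Ω → Fin m → ℝ} {η : ℝ} (hη : 0 < η)
    (hW : ∀ n b j, Measurable fun ω => W n b ω j)
    (hlaw : ∀ n b j, μ.map (fun ω => W n b ω j) = gaussianReal 0 (Real.toNNReal (η ^ 2 / 2)))
    (hind : iIndepFun (fun q : Fin N × Bool × Fin m => fun ω => W q.1 q.2.1 ω q.2.2) μ)
    (n : Fin N) : μ.map (noise W η n) = gam2 m := by
  have hhalf : ∀ b, μ.map (fun ω j => W n b ω j / η) = gam m := by
    intro b
    have h1 : iIndepFun (fun j : Fin m => fun ω => W n b ω j) μ :=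
      hind.precomp (g := fun j : Fin m => (n, b, j)) fun j k h => by simpa using h
    have h2 : iIndepFun (fun j : Fin m => fun ω => W n b ω j / η) μ :=
      h1.comp (fun _ x => x / η) fun _ => by fun_prop
    rw [(iIndepFun_iff_map_fun_eq_pi_map fun j => ((hW n b j).div_const η).aemeasurable).1 h2]
    unfold gam
    congr 1
    funext j
    have := gaussianReal_map_div_const (μ := 0) (v := Real.toNNReal (η ^ 2 / 2)) η
    rw [← hlaw n b j, Measure.map_map (by fun_prop) (hW n b j)] at this
    refine Eq.trans ?_ (this.trans ?_)
    · rfl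
    · congr 1
      · simp
      · ext
        simp
        rw [max_eq_left (by positivity)]
        field_simp
  have hindep : IndepFun (fun ω j => W n false ω j / η) (fun ω j => W n true ω j / η) μ := by
    refine indep_gen (U := fun q : Fin N × Bool × Fin m => fun ω => W q.1 q.2.1 ω q.2.2)
      (fun q => hW _ _ _) hind (A := {q | q.2.1 = false}) (B := {q | q.2.1 = true}) ?_ ?_ ?_
    · rw [Set.disjoint_left]; intro q hq hq'; simp_all
    · refine half_meas fun j => ?_
      exact meas_gen (U := fun q : Fin N × Bool × Fin m => fun ω => W q.1 q.2.1 ω q.2.2)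
        (A := {q | q.2.1 = false}) (i := (n, false, j)) (by simp)
    · refine half_meas fun j => ?_
      exact meas_gen (U := fun q : Fin N × Bool × Fin m => fun ω => W q.1 q.2.1 ω q.2.2)
        (A := {q | q.2.1 = true}) (i := (n, true, j)) (by simp)
  have hm : ∀ b, Measurable (fun ω j => W n b ω j / η) := fun b =>
    measurable_pi_lambda _ fun j => (hW n b j).div_const η
  have := (indepFun_iff_map_prod_eq_prod_map_map (hm false).aemeasurable
    (hm true).aemeasurable).1 hindep
  rw [hhalf, hhalf] at this
  exact this

section
variable {d m : ℕ} {f : (Fin d → ℝ) → Fin d → ℝ} {g : (Fin d → ℝ) → Fin d → Fin m → ℝ} {C : ℝ}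

lemma iterate_bd (R : Reg f g C) {K : ℝ} (hK : 0 ≤ K)
    (H : ∀ (η : ℝ) (x y z : Fin d → ℝ), 0 ≤ η → η ≤ C →
      EB (fun ξ => lyap η (fine f g η x ξ) (fine f g η y ξ.swap) (coarse f g η z ξ))
      ((1 + K * η ^ 2) * lyap η x y z)) {η : ℝ} (hη : 0 < η) (hηC : η ≤ C)
    {N : ℕ} {Ω : Type} [MeasurableSpace Ω] {μ : Measure Ω} [IsProbabilityMeasure μ]
    {W : Fin N → Bool → Ω → Fin m → ℝ}
    (hW : ∀ n b j, Measurable fun ω => W n b ω j)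
    (hlaw : ∀ n b j, μ.map (fun ω => W n b ω j) = gaussianReal 0 (Real.toNNReal (η ^ 2 / 2)))
    (hind : iIndepFun (fun q : Fin N × Bool × Fin m => fun ω => W q.1 q.2.1 ω q.2.2) μ)
    {S : ℕ → Ω → St d} {s0 : St d} (h0 : ∀ ω, S 0 ω = s0)
    (hS : ∀ (n : Fin N) ω, S (n + 1) ω = stp f g η (S n ω, noise W η n ω)) :
    ∀ n, n ≤ N → Measurable (S n) ∧
      ∫⁻ ω, ENNReal.ofReal ((fun s : St d => lyap η s.1 s.2.1 s.2.2) (S n ω)) ∂μ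
        ≤ ENNReal.ofReal (1 + K * η ^ 2) ^ n * ENNReal.ofReal (lyap η s0.1 s0.2.1 s0.2.2) := by
  set U := (fun q : Fin N × Bool × Fin m => fun ω => W q.1 q.2.1 ω q.2.2) with hU
  have hUm : ∀ q, Measurable (U q) := fun q => hW _ _ _
  have hmeas : ∀ n, n ≤ N → Measurable[⨆ q ∈ {q : Fin N × Bool × Fin m | (q.1 : ℕ) < n},
      MeasurableSpace.comap (U q) inferInstance] (S n) := by
    intro n
    induction n with
    | zero =>
      intro _
      have : S 0 = fun _ => s0 := funext h0
      rw [this]; exact measurable_const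
    | succ n ih =>
      intro hn
      have e : S (n + 1) = fun ω => stp f g η (S n ω, noise W η ⟨n, hn⟩ ω) :=
        funext fun ω => hS ⟨n, hn⟩ ω
      rw [e]
      have h1 : Measurable[⨆ q ∈ {q : Fin N × Bool × Fin m | (q.1 : ℕ) < n + 1},
          MeasurableSpace.comap (U q) inferInstance] (S n) := by
        refine (ih (by omega)).mono ?_ le_rfl
        exact biSup_mono fun q hq => Nat.lt_succ_of_lt hq
      have h2 : Measurable[⨆ q ∈ {q : Fin N × Bool × Fin m | (q.1 : ℕ) < n + 1},
          MeasurableSpace.comap (U q) inferInstance] (noise W η ⟨n, hn⟩) :=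
        noise_meas W η ⟨n, hn⟩ fun b j => by simp
      exact (stp_cont R η).measurable.comp (h1.prodMk h2)
  intro n
  induction n with
  | zero => intro hn; exact ⟨(hmeas 0 hn).mono (gen_le hUm _) le_rfl, by simp [h0]⟩
  | succ n ih =>
    intro hn
    obtain ⟨i1, i2⟩ := ih (by omega)
    refine ⟨(hmeas _ hn).mono (gen_le hUm _) le_rfl, ?_⟩
    have hnm := noise_meas W η ⟨n, hn⟩ (A := {q : Fin N × Bool × Fin m | (q.1 : ℕ) = n})
      fun b j => by simp
    have hI : IndepFun (S n) (noise W η ⟨n, hn⟩) μ :=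
      indep_gen hUm hind (by
        rw [Set.disjoint_left]; intro q hq hq'
        simp only [Set.mem_ofPred_eq] at hq hq'
        omega) (hmeas n (by omega)) hnm
    have hst := step_lintegral R hK H hη.le hηC i1 (hnm.mono (gen_le hUm _) le_rfl) hI
      (noise_law hη hW hlaw hind ⟨n, hn⟩)
    have e : ∀ ω, S (n + 1) ω = stp f g η (S n ω, noise W η ⟨n, hn⟩ ω) := fun ω => hS ⟨n, hn⟩ ω
    simp only [e]
    refine hst.trans ?_
    rw [pow_succ' _ n, mul_assoc]
    gcongr

end

end AM

/-- in the antithetic Milstein setting (fine path `Xf` on the fine grid of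
spacing `Δt/2`, with `Xf (2n)` the value at coarse time `n Δt`; antithetic path `Xa` with
the two half-step Brownian increments swapped in each coarse step), for any payoff
`P : ℝ^d → ℝ` which is `C²` with uniformly bounded first and second derivatives there is
a constant `K`, independent of `N`, such that the multilevel correction variance satisfies
`Var[½(P(Xf_N) + P(Xa_N)) − P(Xc_N)] ≤ K Δt²` for every `N ≥ 1`, `Δt = T/N`. -/
theorem antithetic_milstein_correction_variance
    {d m : ℕ} (hd : 0 < d) (hm : 0 < m) (T : ℝ) (hT : 0 < T)
    (f : (Fin d → ℝ) → Fin d → ℝ) (g : (Fin d → ℝ) → Fin d → Fin m → ℝ)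
    (hf : ContDiff ℝ 2 f) (hg : ContDiff ℝ 2 g) (Cfg : ℝ)
    (hf1 : ∀ x, ‖fderiv ℝ f x‖ ≤ Cfg) (hf2 : ∀ x, ‖iteratedFDeriv ℝ 2 f x‖ ≤ Cfg)
    (hg1 : ∀ x, ‖fderiv ℝ g x‖ ≤ Cfg) (hg2 : ∀ x, ‖iteratedFDeriv ℝ 2 g x‖ ≤ Cfg)
    (x₀ : Fin d → ℝ)
    (P : (Fin d → ℝ) → ℝ) (hP : ContDiff ℝ 2 P) (CP : ℝ)
    (hP1 : ∀ x, ‖fderiv ℝ P x‖ ≤ CP) (hP2 : ∀ x, ‖iteratedFDeriv ℝ 2 P x‖ ≤ CP) :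
    ∃ K : ℝ, ∀ N : ℕ, 1 ≤ N →
      ∀ (Ω : Type) (_ : MeasurableSpace Ω) (μ : Measure Ω), IsProbabilityMeasure μ →
      ∀ (W : Fin N → Bool → Ω → Fin m → ℝ) (Xf Xa Xc : ℕ → Ω → Fin d → ℝ),
        (∀ n b j, Measurable fun ω => W n b ω j) →
        (∀ n b j, μ.map (fun ω => W n b ω j) = gaussianReal 0 (Real.toNNReal (T / N / 2))) →
        iIndepFun
          (fun q : Fin N × Bool × Fin m => fun ω => W q.1 q.2.1 ω q.2.2) μ →
        (∀ ω, Xf 0 ω = x₀) → (∀ ω, Xa 0 ω = x₀) → (∀ ω, Xc 0 ω = x₀) →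
        (∀ (n : Fin N) ω, Xf (2 * (n : ℕ) + 1) ω
            = milsteinStep f g (T / N / 2) (Xf (2 * (n : ℕ)) ω) (W n false ω)) →
        (∀ (n : Fin N) ω, Xf (2 * (n : ℕ) + 2) ω
            = milsteinStep f g (T / N / 2) (Xf (2 * (n : ℕ) + 1) ω) (W n true ω)) →
        (∀ (n : Fin N) ω, Xa (2 * (n : ℕ) + 1) ω
            = milsteinStep f g (T / N / 2) (Xa (2 * (n : ℕ)) ω) (W n true ω)) →
        (∀ (n : Fin N) ω, Xa (2 * (n : ℕ) + 2) ω
            = milsteinStep f g (T / N / 2) (Xa (2 * (n : ℕ) + 1) ω) (W n false ω)) →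
        (∀ (n : Fin N) ω, Xc ((n : ℕ) + 1) ω
            = milsteinStep f g (T / N) (Xc (n : ℕ) ω) (W n false ω + W n true ω)) →
        variance (fun ω => 1 / 2 * (P (Xf (2 * N) ω) + P (Xa (2 * N) ω)) - P (Xc N ω)) μ
          ≤ K * (T / N) ^ 2 := by
  obtain ⟨C, hMC, R⟩ := AM.reg_exists f g hf hg Cfg hf1 hf2 hg1 hg2 (Real.sqrt T)
  obtain ⟨K, hK, H⟩ := AM.one_step R
  have hCP : 0 ≤ CP := (norm_nonneg _).trans (hP1 0)
  refine ⟨4 * CP ^ 2 * (Real.exp (K * T) *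
    (1 + (∑ i, x₀ i ^ 4 + (∑ i, x₀ i ^ 4 + ∑ i, x₀ i ^ 4)))), ?_⟩
  intro N hN Ω _ μ _ W Xf Xa Xc hW hlaw hind f0 a0 c0 hf' hf'' ha' ha'' hc'
  have hN0 : (0 : ℝ) < N := by exact_mod_cast hN
  set η := Real.sqrt (T / N) with hη'
  have hTN : 0 < T / N := by positivity
  have hη : 0 < η := Real.sqrt_pos.2 hTN
  have hη2 : η ^ 2 = T / N := Real.sq_sqrt hTN.le
  have hηC : η ≤ C := by
    refine le_trans (Real.sqrt_le_sqrt ?_) hMC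
    exact div_le_self hT.le (by exact_mod_cast hN)
  simp only [← hη2] at hlaw hf' hf'' ha' ha'' hc' ⊢
  have hcan : ∀ n b ω, (fun j => η * (W n b ω j / η)) = W n b ω := fun n b ω => by
    funext j; field_simp
  let S : ℕ → Ω → AM.St d := fun n ω => (Xf (2 * n) ω, Xa (2 * n) ω, Xc n ω)
  have hS : ∀ (n : Fin N) ω, S (n + 1) ω = AM.stp f g η (S n ω, AM.noise W η n ω) := by
    intro n ω
    simp only [S]
    have e1 : 2 * ((n : ℕ) + 1) = 2 * (n : ℕ) + 2 := by ring
    simp only [AM.stp, AM.noise, AM.fine, AM.mid, Prod.fst_swap, Prod.snd_swap, hcan, e1]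
    rw [hf'', hf', ha'', ha', hc', ← AM.coarse_eq]
    congr 3
    funext j
    simp only [Pi.add_apply]
    field_simp
  obtain ⟨hm, hb⟩ := AM.iterate_bd R hK H hη hηC hW hlaw hind (s0 := (x₀, x₀, x₀)) (S := S)
    (fun ω => by simp [S, f0, a0, c0]) hS N le_rfl
  have hmf : Measurable (Xf (2 * N)) := hm.fst
  have hma : Measurable (Xa (2 * N)) := hm.snd.fst
  have hmc : Measurable (Xc N) := hm.snd.snd
  have hPm : Measurable P := hP.continuous.measurable
  have hY : Measurable (fun ω => 1 / 2 * (P (Xf (2 * N) ω) + P (Xa (2 * N) ω)) - P (Xc N ω)) :=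
    (((hPm.comp hmf).add (hPm.comp hma)).const_mul _).sub (hPm.comp hmc)
  refine (variance_le_expectation_sq hY.aestronglyMeasurable).trans ?_
  simp only [Pi.pow_apply]
  rw [integral_eq_lintegral_of_nonneg_ae (Filter.Eventually.of_forall fun ω => sq_nonneg _)
    (hY.pow_const 2).aestronglyMeasurable]
  have hK1 : 0 ≤ 1 + K * η ^ 2 := by positivity
  have hl0 : AM.lyap η x₀ x₀ x₀ = η ^ 4 *
      (1 + (∑ i, x₀ i ^ 4 + (∑ i, x₀ i ^ 4 + ∑ i, x₀ i ^ 4))) := by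
    unfold AM.lyap
    have : ∀ a : ℝ, 1 / 2 * (a + a) - a = 0 := fun a => by ring
    simp only [this, sub_self]
    simp
  set X := (1 + (∑ i, x₀ i ^ 4 + (∑ i, x₀ i ^ 4 + ∑ i, x₀ i ^ 4))) with hX
  have hX0 : 0 ≤ X := by positivity
  have hexp : (1 + K * η ^ 2) ^ N ≤ Real.exp (K * T) := by
    have h1 : 1 + K * η ^ 2 ≤ Real.exp (K * η ^ 2) := by
      have := Real.add_one_le_exp (K * η ^ 2); linarith
    calc _ ≤ Real.exp (K * η ^ 2) ^ N := by gcongr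
      _ = Real.exp (N * (K * η ^ 2)) := (Real.exp_nat_mul _ _).symm
      _ = _ := by congr 1; rw [hη2]; field_simp
  refine ENNReal.toReal_le_of_le_ofReal (by positivity) ?_
  calc _ ≤ ∫⁻ ω, ENNReal.ofReal (4 * CP ^ 2) *
        ENNReal.ofReal (AM.lyap η (Xf (2 * N) ω) (Xa (2 * N) ω) (Xc N ω)) ∂μ := by
        refine lintegral_mono fun ω => ?_
        rw [← ENNReal.ofReal_mul (by positivity)]
        exact ENNReal.ofReal_le_ofReal (AM.payoff_bd hP hCP hP1 hP2 η _ _ _)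
    _ = ENNReal.ofReal (4 * CP ^ 2) *
        ∫⁻ ω, ENNReal.ofReal (AM.lyap η (Xf (2 * N) ω) (Xa (2 * N) ω) (Xc N ω)) ∂μ :=
        lintegral_const_mul' _ _ ENNReal.ofReal_ne_top
    _ ≤ ENNReal.ofReal (4 * CP ^ 2) * (ENNReal.ofReal (1 + K * η ^ 2) ^ N *
        ENNReal.ofReal (AM.lyap η x₀ x₀ x₀)) := by gcongr
    _ = ENNReal.ofReal (4 * CP ^ 2 * ((1 + K * η ^ 2) ^ N * (η ^ 4 * X))) := by
        rw [hl0, ENNReal.ofReal_mul (p := 4 * CP ^ 2) (by positivity),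
          ENNReal.ofReal_mul (p := (1 + K * η ^ 2) ^ N) (by positivity),
          ENNReal.ofReal_pow hK1]
    _ ≤ _ := by
        refine ENNReal.ofReal_le_ofReal ?_
        calc _ ≤ 4 * CP ^ 2 * (Real.exp (K * T) * (η ^ 4 * X)) := by gcongr
          _ = _ := by ring
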